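/- arXiv:2306.16183 — 3 statements merged into one kernel-verified Lean document; each statement's English description precedes it below -/
import Mathlib

section
/- Let s ∈ (1,2], let F ∈ C^s(ℝⁿ) be nonnegative, and let Ω ⊆ ℝⁿ be a convex open set. Then the restriction F_Ω of F to Ω satisfies F_Ω ∈ F^s(Ω) and ‖F_Ω‖_{Ḟ^s(Ω)} ≤ (2^s/s) · ‖F‖_{Ċ^s(ℝⁿ)}. -/
open Set ENNReal
open scoped NNReal

noncomputable section

/-- The largest integer strictly less than `s` (for `s > 0`). -/
def lowFloor (s : ℝ) : ℕ := ⌈s⌉₊ - 1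

variable {E : Type*} [NormedAddCommGroup E] [NormedSpace ℝ E]

/-- `max_{0 ≤ m < s} sup_{x ∈ Ω} |∇^m F(x)|`, valued in `ℝ≥0∞`. -/
def derivSup (s : ℝ) (Ω : Set E) (F : E → ℝ) : ℝ≥0∞ :=
  ⨆ (m : ℕ) (_ : m ≤ lowFloor s) (x : E) (_ : x ∈ Ω),
    (‖iteratedFDerivWithin ℝ m F Ω x‖₊ : ℝ≥0∞)

/-- The homogeneous Hölder seminorm `‖F‖_{Ċ^s(Ω)}`, valued in `ℝ≥0∞`. -/
def holderSemi (s : ℝ) (Ω : Set E) (F : E → ℝ) : ℝ≥0∞ :=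
  ⨆ (x : E) (_ : x ∈ Ω) (y : E) (_ : y ∈ Ω) (_ : x ≠ y),
    (‖iteratedFDerivWithin ℝ (lowFloor s) F Ω x
        - iteratedFDerivWithin ℝ (lowFloor s) F Ω y‖₊ : ℝ≥0∞)
      / ENNReal.ofReal (‖x - y‖ ^ (s - (lowFloor s : ℝ)))

/-- The Hölder norm `‖F‖_{C^s(Ω)}`, valued in `ℝ≥0∞`. -/
def csNorm (s : ℝ) (Ω : Set E) (F : E → ℝ) : ℝ≥0∞ :=
  derivSup s Ω F + holderSemi s Ω F

/-- Membership in `C^s(Ω)`. -/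
def MemCs (s : ℝ) (Ω : Set E) (F : E → ℝ) : Prop :=
  ContDiffOn ℝ (lowFloor s : ℕ∞) F Ω ∧ csNorm s Ω F ≠ ∞

/-- The flat seminorm `‖F‖_{Ḟ^s(Ω)}`, valued in `ℝ≥0∞`.  (In `ℝ≥0∞` one has
`0/0 = 0` and `a/0 = ∞` for `a ≠ 0`, matching the paper's conventions; for
`0 < s < 1` the supremum is empty, hence `0`.) -/
def flatSemi (s : ℝ) (Ω : Set E) (F : E → ℝ) : ℝ≥0∞ :=
  ⨆ (m : ℕ) (_ : 1 ≤ m) (_ : m ≤ lowFloor s) (x : E) (_ : x ∈ Ω),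
    ((‖iteratedFDerivWithin ℝ m F Ω x‖₊ : ℝ≥0∞) ^ s
      / ENNReal.ofReal (F x) ^ (s - (m : ℝ))) ^ (1 / (m : ℝ))

/-- Membership in the cone `F^s(Ω)`. -/
def MemFs (s : ℝ) (Ω : Set E) (F : E → ℝ) : Prop :=
  MemCs s Ω F ∧ (∀ x ∈ Ω, 0 ≤ F x) ∧ flatSemi s Ω F ≠ ∞

/-- The norm `‖F‖_{F^s(Ω)} = ‖F‖_{C^s(Ω)} + ‖F‖_{Ḟ^s(Ω)}`. -/
def fsNorm (s : ℝ) (Ω : Set E) (F : E → ℝ) : ℝ≥0∞ :=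
  csNorm s Ω F + flatSemi s Ω F

/-- `sup_{x ∈ Ω} |F(x)|`, valued in `ℝ≥0∞`. -/
def supNormSet (Ω : Set E) (F : E → ℝ) : ℝ≥0∞ :=
  ⨆ (x : E) (_ : x ∈ Ω), (‖F x‖₊ : ℝ≥0∞)

/-- `P` is (the function given by) a polynomial of degree at most `D`. -/
def IsPolyDeg (D : ℕ) (P : E → ℝ) : Prop :=
  ContDiff ℝ (⊤ : ℕ∞) P ∧ ∀ x, iteratedFDeriv ℝ (D + 1) P x = 0

/-- The degree-`D` Taylor polynomial (jet) of `F` at `x`, as a function. -/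
def jetAt (D : ℕ) (F : E → ℝ) (x : E) : E → ℝ :=
  fun y => ∑ m ∈ Finset.range (D + 1),
    (iteratedFDeriv ℝ m F x fun _ => y - x) / m.factorial

/-- The degree-`D` Taylor polynomial of `F` at `x` using derivatives within `Ω`. -/
def jetWithinAt (D : ℕ) (F : E → ℝ) (Ω : Set E) (x : E) : E → ℝ :=
  fun y => ∑ m ∈ Finset.range (D + 1),
    (iteratedFDerivWithin ℝ m F Ω x fun _ => y - x) / m.factorial

/-- The pointwise flatness quantity `max_{1≤m<s} (|∇^m P(x)|^s / P(x)^{s-m})^{1/m}`. -/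
def jetFlatAt (s : ℝ) (P : E → ℝ) (x : E) : ℝ≥0∞ :=
  ⨆ (m : ℕ) (_ : 1 ≤ m) (_ : m ≤ lowFloor s),
    ((‖iteratedFDeriv ℝ m P x‖₊ : ℝ≥0∞) ^ s
      / ENNReal.ofReal (P x) ^ (s - (m : ℝ))) ^ (1 / (m : ℝ))

/-- The set `Γ(x₀, M)` of flat nonnegative jets. -/
def Gamma (s : ℝ) (x₀ : E) (M : ℝ) : Set (E → ℝ) :=
  {P | IsPolyDeg (lowFloor s) P ∧ 0 ≤ P x₀ ∧
    (∀ m ≤ lowFloor s, ‖iteratedFDeriv ℝ m P x₀‖ ≤ M) ∧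
    jetFlatAt s P x₀ ≤ ENNReal.ofReal M}

/-- `‖P⃗‖_{J C^s(E)}` for a family of jets `P : E → (E → ℝ)`. -/
def jetCNorm (s : ℝ) (Eset : Set E) (P : E → E → ℝ) : ℝ≥0∞ :=
  (⨆ (x : E) (_ : x ∈ Eset) (m : ℕ) (_ : m ≤ lowFloor s),
      (‖iteratedFDeriv ℝ m (P x) x‖₊ : ℝ≥0∞))
  + ⨆ (x : E) (_ : x ∈ Eset) (y : E) (_ : y ∈ Eset) (_ : x ≠ y)
      (m : ℕ) (_ : m ≤ lowFloor s),
      (‖iteratedFDeriv ℝ m (P x - P y) y‖₊ : ℝ≥0∞)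
        / ENNReal.ofReal (‖x - y‖ ^ (s - (m : ℝ)))

/-- `‖P⃗‖_{J Ḟ^s(E)}` for a family of jets. -/
def jetFlatNorm (s : ℝ) (Eset : Set E) (P : E → E → ℝ) : ℝ≥0∞ :=
  ⨆ (x : E) (_ : x ∈ Eset) (m : ℕ) (_ : 1 ≤ m) (_ : m ≤ lowFloor s),
    ((‖iteratedFDeriv ℝ m (P x) x‖₊ : ℝ≥0∞) ^ s
      / ENNReal.ofReal |P x x| ^ (s - (m : ℝ))) ^ (1 / (m : ℝ))

/-- `‖P⃗‖_{J F^s(E)}`. -/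
def jetFsNorm (s : ℝ) (Eset : Set E) (P : E → E → ℝ) : ℝ≥0∞ :=
  jetCNorm s Eset P + jetFlatNorm s Eset P

/-- The trace norm `‖f‖_{F^s(S)}` (with `inf ∅ = ∞`). -/
def traceNorm (s : ℝ) (S : Set E) (f : E → ℝ) : ℝ≥0∞ :=
  ⨅ (F : E → ℝ) (_ : MemFs s (univ : Set E) F ∧ ∀ x ∈ S, F x = f x),
    fsNorm s (univ : Set E) F


/-- For `s ∈ (1, 2]` the largest integer strictly less than `s` is `1`. -/
lemma lowFloor_eq_one {s : ℝ} (hs1 : 1 < s) (hs2 : s ≤ 2) : lowFloor s = 1 := by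
  have h : ⌈s⌉₊ = 2 := by
    rw [Nat.ceil_eq_iff (by norm_num)]
    constructor <;> norm_num <;> assumption
  simp [lowFloor, h]

lemma derivSup_le_univ_of_isOpen (s : ℝ) {Ω : Set E} (hΩ : IsOpen Ω) (F : E → ℝ) :
    derivSup s Ω F ≤ derivSup s univ F := by
  refine iSup_mono fun m => iSup_mono fun _ => iSup_mono fun x => iSup_le fun hx => ?_
  refine le_trans ?_ (le_iSup _ (mem_univ x))
  rw [iteratedFDerivWithin_of_isOpen m hΩ hx, iteratedFDerivWithin_univ]

lemma holderSemi_le_univ_of_isOpen (s : ℝ) {Ω : Set E} (hΩ : IsOpen Ω) (F : E → ℝ) :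
    holderSemi s Ω F ≤ holderSemi s univ F := by
  refine iSup_mono fun x => iSup_le fun hx => ?_
  refine le_trans ?_ (le_iSup _ (mem_univ x))
  refine iSup_mono fun y => iSup_le fun hy => ?_
  refine le_trans ?_ (le_iSup _ (mem_univ y))
  rw [iteratedFDerivWithin_of_isOpen _ hΩ hx, iteratedFDerivWithin_of_isOpen _ hΩ hy,
    iteratedFDerivWithin_univ]

lemma MemCs.of_isOpen {s : ℝ} {F : E → ℝ} (hF : MemCs s univ F) {Ω : Set E} (hΩ : IsOpen Ω) :
    MemCs s Ω F :=
  ⟨hF.1.mono (subset_univ Ω), ne_top_of_le_ne_top hF.2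
    (add_le_add (derivSup_le_univ_of_isOpen s hΩ F) (holderSemi_le_univ_of_isOpen s hΩ F))⟩

/-- A finite seminorm `‖F‖_{Ċ^s}` is a Hölder constant for the directional derivatives of `F`. -/
lemma fderiv_sub_apply_le_holderSemi {s : ℝ} (hs1 : 1 < s) (hs2 : s ≤ 2) {F : E → ℝ}
    (hF : holderSemi s univ F ≠ ∞) (x y v : E) :
    |fderiv ℝ F x v - fderiv ℝ F y v|
      ≤ (holderSemi s univ F).toReal * ‖x - y‖ ^ (s - 1) * ‖v‖ := by
  rcases eq_or_ne x y with rfl | hxy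
  · rw [sub_self, abs_zero]
    positivity
  have hpos : 0 < ‖x - y‖ ^ (s - 1) := Real.rpow_pos_of_pos (norm_pos_iff.2 (sub_ne_zero.2 hxy)) _
  have hle : (‖iteratedFDeriv ℝ 1 F x - iteratedFDeriv ℝ 1 F y‖₊ : ℝ≥0∞)
      / ENNReal.ofReal (‖x - y‖ ^ (s - 1)) ≤ holderSemi s univ F := by
    unfold holderSemi
    rw [lowFloor_eq_one hs1 hs2, iteratedFDerivWithin_univ, Nat.cast_one]
    exact le_iSup₂_of_le x (mem_univ x)
      (le_iSup₂_of_le y (mem_univ y) (le_iSup_of_le hxy le_rfl))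
  rw [ENNReal.div_le_iff (by simpa using hpos) ENNReal.ofReal_ne_top] at hle
  have hreal := ENNReal.toReal_mono (ENNReal.mul_ne_top hF ENNReal.ofReal_ne_top) hle
  rw [ENNReal.toReal_mul, ENNReal.toReal_ofReal hpos.le, ENNReal.coe_toReal, coe_nnnorm] at hreal
  have hop := (iteratedFDeriv ℝ 1 F x - iteratedFDeriv ℝ 1 F y).le_opNorm fun _ => v
  simp only [sub_apply, iteratedFDeriv_one_apply,
    Finset.univ_unique, Finset.prod_const, Finset.card_singleton, pow_one, Real.norm_eq_abs] at hop
  exact hop.trans (mul_le_mul_of_nonneg_right hreal (norm_nonneg v))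

/-- First-order Taylor upper bound along a unit direction for a differentiable function whose
derivative is `(s - 1)`-Hölder with constant `M`. -/
lemma le_taylor_of_holder_fderiv {s M : ℝ} (hs1 : 1 < s) {F : E → ℝ} (hd : Differentiable ℝ F)
    (hM : ∀ x y v, |fderiv ℝ F x v - fderiv ℝ F y v| ≤ M * ‖x - y‖ ^ (s - 1) * ‖v‖)
    (x : E) {v : E} (hv : ‖v‖ = 1) {t : ℝ} (ht : 0 ≤ t) :
    F (x + t • v) ≤ F x + t * fderiv ℝ F x v + M * t ^ s / s := by
  have hs : s ≠ 0 := by positivity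
  let ψ : ℝ → ℝ := fun r => F (x + r • v) - r * fderiv ℝ F x v - M / s * r ^ s
  have hψ : ∀ r, HasDerivAt ψ
      (fderiv ℝ F (x + r • v) v - fderiv ℝ F x v - M * r ^ (s - 1)) r := by
    intro r
    have hline : HasDerivAt (fun r : ℝ => x + r • v) v r := by
      simpa using ((hasDerivAt_id r).smul_const v).const_add x
    have h1 := (hd (x + r • v)).hasFDerivAt.comp_hasDerivAt r hline
    have h2 := (hasDerivAt_id r).mul_const (fderiv ℝ F x v)
    have h3 := (Real.hasDerivAt_rpow_const (x := r) (p := s) (Or.inr hs1.le)).const_mul (M / s)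
    refine ((h1.sub h2).sub h3).congr_deriv ?_
    field_simp
  have hanti : AntitoneOn ψ (Ici 0) := by
    refine antitoneOn_of_hasDerivWithinAt_nonpos (convex_Ici 0)
      (fun r _ => (hψ r).continuousAt.continuousWithinAt) (fun r _ => (hψ r).hasDerivWithinAt) ?_
    intro r hr
    rw [interior_Ici] at hr
    have h := (abs_le.1 (hM (x + r • v) x v)).2
    rw [add_sub_cancel_left, norm_smul, hv, mul_one, mul_one, Real.norm_eq_abs,
      abs_of_pos hr] at h
    linarith
  have h := hanti self_mem_Ici ht ht
  simp only [ψ, zero_smul, add_zero, zero_mul, Real.zero_rpow hs, mul_zero, sub_zero] at h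
  have : M * t ^ s / s = M / s * t ^ s := by ring
  linarith

/-- Optimization of `t * g ≤ a + M * t ^ s / s` over `t > 0`. -/
lemma rpow_le_of_forall_mul_le {s M g a : ℝ} (hs1 : 1 < s) (hM : 0 ≤ M) (hg : 0 ≤ g) (ha : 0 ≤ a)
    (h : ∀ t, 0 < t → t * g ≤ a + M * t ^ s / s) :
    g ^ s ≤ 2 ^ s / s * M * a ^ (s - 1) := by
  have hs : 0 < s := by positivity
  have hα : 0 < s - 1 := sub_pos.2 hs1
  rcases hg.eq_or_lt with rfl | hg
  · rw [Real.zero_rpow hs.ne']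
    positivity
  rcases hM.eq_or_lt with rfl | hM
  · have h1 := h ((a + 1) / g) (by positivity)
    rw [div_mul_cancel₀ _ hg.ne'] at h1
    simp only [zero_mul, zero_div, add_zero] at h1
    linarith
  set t : ℝ := (g * s / (2 * M)) ^ (s - 1)⁻¹ with ht
  have hbase : 0 < g * s / (2 * M) := by positivity
  have htpos : 0 < t := Real.rpow_pos_of_pos hbase _
  have htα : t ^ (s - 1) = g * s / (2 * M) := by
    rw [ht, Real.rpow_inv_rpow hbase.le hα.ne']
  have hts : t ^ s = g * s / (2 * M) * t := by
    rw [← htα, ← Real.rpow_add_one htpos.ne', sub_add_cancel]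
  have h1 := h t htpos
  have h2 : M * t ^ s / s = t * g / 2 := by
    rw [hts]
    field_simp
  have h3 : t * (g / 2) ≤ a := by linarith
  have h4 := Real.rpow_le_rpow (by positivity) h3 hα.le
  rw [Real.mul_rpow htpos.le (by positivity), htα, Real.div_rpow hg.le (by norm_num),
    Real.rpow_sub_one hg.ne', Real.rpow_sub_one two_ne_zero] at h4
  calc g ^ s = 2 ^ s / s * M * (g * s / (2 * M) * (g ^ s / g / (2 ^ s / 2))) := by
        field_simp
    _ ≤ _ := by gcongr

/-- The gradient inequality `|∇F|^s ≤ (2^s/s) M F^{s-1}` for nonnegative functions whose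
derivative is `(s - 1)`-Hölder with constant `M`. -/
lemma norm_fderiv_rpow_le {s M : ℝ} (hs1 : 1 < s) (hM0 : 0 ≤ M) {F : E → ℝ}
    (hF : ∀ x, 0 ≤ F x) (hd : Differentiable ℝ F)
    (hM : ∀ x y v, |fderiv ℝ F x v - fderiv ℝ F y v| ≤ M * ‖x - y‖ ^ (s - 1) * ‖v‖) (x : E) :
    ‖fderiv ℝ F x‖ ^ s ≤ 2 ^ s / s * M * F x ^ (s - 1) := by
  refine rpow_le_of_forall_mul_le hs1 hM0 (norm_nonneg _) (hF x) fun t ht => ?_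
  have hb : 0 ≤ F x + M * t ^ s / s := by
    have := hF x
    positivity
  rw [mul_comm, ← le_div_iff₀ ht]
  refine ContinuousLinearMap.opNorm_le_of_unit_norm (by positivity) fun v hv => ?_
  rw [le_div_iff₀ ht, Real.norm_eq_abs, mul_comm, ← abs_of_pos ht, ← abs_mul, abs_of_pos ht]
  have h1 := le_taylor_of_holder_fderiv hs1 hd hM x hv ht.le
  have h2 := le_taylor_of_holder_fderiv hs1 hd hM x ((norm_neg v).trans hv) ht.le
  rw [map_neg] at h2
  have h3 := hF (x + t • v)
  have h4 := hF (x + t • -v)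
  exact abs_le.2 ⟨by linarith, by linarith⟩

/-- The flat seminorm of a nonnegative `C^s` function on an open set is controlled by its global
Hölder seminorm. -/
lemma flatSemi_le_holderSemi {s : ℝ} (hs1 : 1 < s) (hs2 : s ≤ 2) {F : E → ℝ}
    (hF : ∀ x, 0 ≤ F x) (hCs : MemCs s univ F) {Ω : Set E} (hΩ : IsOpen Ω) :
    flatSemi s Ω F ≤ ENNReal.ofReal (2 ^ s / s) * holderSemi s univ F := by
  have hs : 0 < s := by positivity
  have hfin : holderSemi s univ F ≠ ∞ := ne_top_of_le_ne_top hCs.2 le_add_self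
  have hd : Differentiable ℝ F := by
    have h := hCs.1
    rw [lowFloor_eq_one hs1 hs2, contDiffOn_univ] at h
    exact h.differentiable (by simp)
  refine iSup_le fun m => iSup_le fun hm1 => iSup_le fun hm => iSup₂_le fun x hx => ?_
  obtain rfl : m = 1 := le_antisymm (hm.trans (lowFloor_eq_one hs1 hs2).le) hm1
  rw [Nat.cast_one, div_one, ENNReal.rpow_one, iteratedFDerivWithin_of_isOpen 1 hΩ hx]
  refine ENNReal.div_le_of_le_mul ?_
  have h := norm_fderiv_rpow_le hs1 ENNReal.toReal_nonneg hF hd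
    (fderiv_sub_apply_le_holderSemi hs1 hs2 hfin) x
  rw [← norm_iteratedFDeriv_one] at h
  have h' := ENNReal.ofReal_le_ofReal h
  rwa [ENNReal.ofReal_mul (by positivity), ENNReal.ofReal_mul (by positivity),
    ENNReal.ofReal_toReal hfin, ← ENNReal.ofReal_rpow_of_nonneg (hF x) (by linarith),
    ← ENNReal.ofReal_rpow_of_nonneg (norm_nonneg _) hs.le, ofReal_norm] at h'

/-- Proposition `c2`, second part: for `s ∈ (1,2]` and a
nonnegative `F ∈ C^s(ℝⁿ)`, the restriction of `F` to any convex open `Ω`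
belongs to `F^s(Ω)` with `‖F_Ω‖_{Ḟ^s(Ω)} ≤ (2^s/s) ‖F‖_{Ċ^s(ℝⁿ)}`. -/
theorem statement9 (n : ℕ) (hn : 1 ≤ n) (s : ℝ) (hs1 : 1 < s) (hs2 : s ≤ 2) :
    ∀ F : EuclideanSpace ℝ (Fin n) → ℝ, (∀ x, 0 ≤ F x) →
      MemCs s (Set.univ : Set (EuclideanSpace ℝ (Fin n))) F →
    ∀ (Ω : Set (EuclideanSpace ℝ (Fin n))), Convex ℝ Ω → IsOpen Ω →
      MemFs s Ω F ∧
      flatSemi s Ω F ≤ ENNReal.ofReal (2 ^ s / s) *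
        holderSemi s (Set.univ : Set (EuclideanSpace ℝ (Fin n))) F := by
  intro F hF hCs Ω _ hΩ
  have hle := flatSemi_le_holderSemi hs1 hs2 hF hCs hΩ
  have hfin : holderSemi s univ F ≠ ∞ := ne_top_of_le_ne_top hCs.2 le_add_self
  exact ⟨⟨hCs.of_isOpen hΩ, fun x _ => hF x,
    ne_top_of_le_ne_top (ENNReal.mul_ne_top ENNReal.ofReal_ne_top hfin) hle⟩, hle⟩

end
end

section
/- Let g : ℝ → [0,∞) be the standard bump function defined by g(t) = exp(1 − 1/(1−t²)) for −1 < t < 1 and g(t) = 0 otherwise. Then for every s > 0 there exists a constant C depending only on s such that g ∈ F^s(ℝ) and ‖g‖_{F^s(ℝ)} ≤ C. -/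
open Set ENNReal
open scoped NNReal

noncomputable section

variable {E : Type*} [NormedAddCommGroup E] [NormedSpace ℝ E]

/-- The standard bump function `g(t) = exp(1 − 1/(1−t²))` for `|t| < 1`, `0`
otherwise. -/
def stdBump : ℝ → ℝ := fun t =>
  if t ^ 2 < 1 then Real.exp (1 - 1 / (1 - t ^ 2)) else 0

/-- A polynomial is dominated by any growing exponential on `[0, ∞)`. -/
lemma exists_abs_eval_le_mul_exp (p : Polynomial ℝ) {a : ℝ} (ha : 0 < a) :
    ∃ C : ℝ, 0 ≤ C ∧ ∀ v : ℝ, 0 ≤ v → |p.eval v| ≤ C * Real.exp (a * v) := by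
  induction p using Polynomial.induction_on' with
  | add p q hp hq =>
    obtain ⟨C, hC, hp⟩ := hp
    obtain ⟨D, hD, hq⟩ := hq
    refine ⟨C + D, by positivity, fun v hv => ?_⟩
    rw [Polynomial.eval_add, add_mul]
    exact (abs_add_le _ _).trans (add_le_add (hp v hv) (hq v hv))
  | monomial n c =>
    refine ⟨|c| * (n.factorial / a ^ n), by positivity, fun v hv => ?_⟩
    have h := Real.pow_div_factorial_le_exp (a * v) (by positivity) n
    rw [div_le_iff₀ (by positivity), mul_pow] at h
    rw [Polynomial.eval_monomial, abs_mul, abs_of_nonneg (pow_nonneg hv n), mul_assoc]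
    refine mul_le_mul_of_nonneg_left ?_ (abs_nonneg c)
    rw [div_mul_eq_mul_div, le_div_iff₀ (by positivity)]
    linarith

/-- The function `r(t) p(1/u) exp(-1/u)` with `u = 1 - t²`, extended by zero to `|t| ≥ 1`. -/
def polyBump (r p : Polynomial ℝ) (t : ℝ) : ℝ :=
  r.eval t * (p.eval (1 - t ^ 2)⁻¹ * expNegInvGlue (1 - t ^ 2))

lemma contDiff_polyBump (r p : Polynomial ℝ) (n : ℕ∞) : ContDiff ℝ n (polyBump r p) :=
  (Polynomial.contDiff_aeval r n).mul ((expNegInvGlue.contDiff_polynomial_eval_inv_mul p).comp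
    (contDiff_const.sub (contDiff_id.pow 2)))

lemma deriv_polyBump (r p : Polynomial ℝ) :
    deriv (polyBump r p) = polyBump r.derivative p +
      polyBump (r * (-2 * Polynomial.X)) (Polynomial.X ^ 2 * (p - p.derivative)) := by
  funext t
  have hu : HasDerivAt (fun t : ℝ => 1 - t ^ 2) (-(2 * t)) t := by
    simpa using ((hasDerivAt_id t).pow 2).const_sub 1
  have h := (r.hasDerivAt t).mul
    ((expNegInvGlue.hasDerivAt_polynomial_eval_inv_mul p (1 - t ^ 2)).comp t hu)
  refine (h.deriv : deriv (polyBump r p) t = _).trans ?_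
  simp [polyBump]
  ring

lemma expNegInvGlue_eq_exp {u : ℝ} (hu : 0 < u) : expNegInvGlue u = Real.exp (-u⁻¹) := by
  simp [expNegInvGlue, not_le.2 hu]

lemma exists_abs_polyBump_le (r p : Polynomial ℝ) {θ : ℝ} (hθ : 0 < θ) (hθ1 : θ < 1) :
    ∃ C : ℝ, 0 ≤ C ∧ ∀ t, |polyBump r p t| ≤ C * expNegInvGlue (1 - t ^ 2) ^ θ := by
  obtain ⟨A, hA⟩ := (isCompact_Icc (a := (-1 : ℝ)) (b := 1)).exists_bound_of_continuousOn
    r.continuous.continuousOn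
  obtain ⟨B, hB, hp⟩ := exists_abs_eval_le_mul_exp p (sub_pos.2 hθ1)
  have hA0 : 0 ≤ A := (norm_nonneg _).trans (hA 0 (by norm_num))
  refine ⟨A * B, by positivity, fun t => ?_⟩
  rcases le_or_gt (1 - t ^ 2) 0 with hu | hu
  · simp [polyBump, expNegInvGlue.zero_of_nonpos hu, Real.zero_rpow hθ.ne']
  · have ht : t ∈ Icc (-1 : ℝ) 1 := abs_le.1 (sq_le_one_iff_abs_le_one t |>.1 (by linarith))
    have hv := hp (1 - t ^ 2)⁻¹ (by positivity)
    rw [polyBump, expNegInvGlue_eq_exp hu, abs_mul, abs_mul, Real.abs_exp, ← Real.exp_mul,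
      mul_assoc]
    refine mul_le_mul (hA t ht) ?_ (by positivity) hA0
    refine (mul_le_mul_of_nonneg_right hv (Real.exp_pos _).le).trans_eq ?_
    rw [mul_assoc, ← Real.exp_add]
    ring_nf

lemma exists_abs_iteratedDeriv_polyBump_le {θ : ℝ} (hθ : 0 < θ) (hθ1 : θ < 1) (m : ℕ)
    (r p : Polynomial ℝ) :
    ∃ C : ℝ, 0 ≤ C ∧
      ∀ t, |iteratedDeriv m (polyBump r p) t| ≤ C * expNegInvGlue (1 - t ^ 2) ^ θ := by
  induction m generalizing r p with
  | zero => simpa using exists_abs_polyBump_le r p hθ hθ1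
  | succ m ih =>
    obtain ⟨C, hC, h₁⟩ := ih r.derivative p
    obtain ⟨D, hD, h₂⟩ := ih (r * (-2 * Polynomial.X)) (Polynomial.X ^ 2 * (p - p.derivative))
    refine ⟨C + D, by positivity, fun t => ?_⟩
    rw [iteratedDeriv_succ', deriv_polyBump, iteratedDeriv_add
      (contDiff_polyBump _ _ m).contDiffAt (contDiff_polyBump _ _ m).contDiffAt, add_mul]
    exact (abs_add_le _ _).trans (add_le_add (h₁ t) (h₂ t))

lemma stdBump_eq_mul (t : ℝ) : stdBump t = Real.exp 1 * expNegInvGlue (1 - t ^ 2) := by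
  unfold stdBump
  split_ifs with h
  · rw [expNegInvGlue_eq_exp (sub_pos.2 h), ← Real.exp_add, one_div, sub_eq_add_neg]
  · rw [expNegInvGlue.zero_of_nonpos (by linarith), mul_zero]

lemma stdBump_eq_polyBump : stdBump = polyBump (Polynomial.C (Real.exp 1)) 1 := by
  funext t
  simp [stdBump_eq_mul, polyBump]

lemma stdBump_nonneg (t : ℝ) : 0 ≤ stdBump t := by
  rw [stdBump_eq_mul]
  exact mul_nonneg (Real.exp_pos 1).le (expNegInvGlue.nonneg _)

lemma contDiff_stdBump (n : ℕ∞) : ContDiff ℝ n stdBump :=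
  stdBump_eq_polyBump ▸ contDiff_polyBump _ _ n

lemma stdBump_le (t : ℝ) : stdBump t ≤ Real.exp 1 := by
  unfold stdBump
  split_ifs with h
  · exact Real.exp_le_exp.2 (sub_le_self 1 (one_div_nonneg.2 (sub_pos.2 h).le))
  · exact (Real.exp_pos 1).le

/-- Every derivative of the bump is controlled by any power `θ ∈ (0, 1)` of the bump itself. -/
lemma exists_norm_iteratedFDeriv_stdBump_le {θ : ℝ} (hθ : 0 < θ) (hθ1 : θ < 1) (m : ℕ) :
    ∃ C : ℝ, 0 ≤ C ∧ ∀ t, ‖iteratedFDeriv ℝ m stdBump t‖ ≤ C * stdBump t ^ θ := by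
  obtain ⟨C, hC, h⟩ :=
    exists_abs_iteratedDeriv_polyBump_le hθ hθ1 m (Polynomial.C (Real.exp 1)) 1
  refine ⟨C, hC, fun t => ?_⟩
  rw [norm_iteratedFDeriv_eq_norm_iteratedDeriv, Real.norm_eq_abs]
  nth_rewrite 1 [stdBump_eq_polyBump]
  refine (h t).trans (mul_le_mul_of_nonneg_left
    (Real.rpow_le_rpow (expNegInvGlue.nonneg _) ?_ hθ.le) hC)
  rw [stdBump_eq_mul]
  exact le_mul_of_one_le_left (expNegInvGlue.nonneg _) (Real.one_le_exp zero_le_one)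

lemma exists_norm_iteratedFDeriv_stdBump_le_const (m : ℕ) :
    ∃ C : ℝ, 0 ≤ C ∧ ∀ t, ‖iteratedFDeriv ℝ m stdBump t‖ ≤ C := by
  obtain ⟨C, hC, h⟩ :=
    exists_norm_iteratedFDeriv_stdBump_le (θ := 1 / 2) (by norm_num) (by norm_num) m
  exact ⟨C * Real.exp 1 ^ (1 / 2 : ℝ), by positivity, fun t => (h t).trans
    (mul_le_mul_of_nonneg_left
      (Real.rpow_le_rpow (stdBump_nonneg t) (stdBump_le t) (by norm_num)) hC)⟩

/-- A supremum over `m ≤ N` is finite as soon as each term is. -/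
lemma iSup_le_nat_ne_top {N : ℕ} {f : ℕ → ℝ≥0∞} (hf : ∀ m ≤ N, f m ≠ ∞) :
    ⨆ (m : ℕ) (_ : m ≤ N), f m ≠ ∞ := by
  refine ne_top_of_le_ne_top (b := ∑ m ∈ Finset.range (N + 1), f m) ?_ (iSup₂_le fun m hm => ?_)
  · exact ENNReal.sum_ne_top.2 fun m hm => hf m (Nat.lt_succ_iff.1 (Finset.mem_range.1 hm))
  · exact Finset.single_le_sum (f := f) (fun _ _ => zero_le)
      (Finset.mem_range.2 (Nat.lt_succ_of_le hm))

lemma lowFloor_lt {s : ℝ} (hs : 0 < s) : (lowFloor s : ℝ) < s :=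
  Nat.lt_ceil.1 (Nat.sub_lt (Nat.ceil_pos.2 hs) one_pos)

lemma le_lowFloor_add_one (s : ℝ) : s ≤ lowFloor s + 1 := by
  refine (Nat.le_ceil s).trans ?_
  exact_mod_cast (by unfold lowFloor; omega : ⌈s⌉₊ ≤ lowFloor s + 1)

lemma derivSup_stdBump_ne_top (s : ℝ) : derivSup s univ stdBump ≠ ∞ := by
  refine iSup_le_nat_ne_top fun m _ => ?_
  obtain ⟨C, -, h⟩ := exists_norm_iteratedFDeriv_stdBump_le_const m
  refine ne_top_of_le_ne_top (b := ENNReal.ofReal C) ENNReal.ofReal_ne_top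
    (iSup₂_le fun x _ => ?_)
  rw [iteratedFDerivWithin_univ, ← enorm_eq_nnnorm, ← ofReal_norm]
  exact ENNReal.ofReal_le_ofReal (h x)

lemma holderSemi_stdBump_ne_top {s : ℝ} (hs : 0 < s) : holderSemi s univ stdBump ≠ ∞ := by
  obtain ⟨B, hB, hb⟩ := exists_norm_iteratedFDeriv_stdBump_le_const (lowFloor s)
  obtain ⟨L, hL, hl⟩ := exists_norm_iteratedFDeriv_stdBump_le_const (lowFloor s + 1)
  have hα : 0 < s - lowFloor s := sub_pos.2 (lowFloor_lt hs)
  have hα1 : s - lowFloor s ≤ 1 := by linarith [le_lowFloor_add_one s]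
  refine ne_top_of_le_ne_top (b := ENNReal.ofReal (L + 2 * B)) ENNReal.ofReal_ne_top
    (iSup₂_le fun x _ => iSup₂_le fun y _ => iSup_le fun _ => ENNReal.div_le_of_le_mul ?_)
  rw [iteratedFDerivWithin_univ, ← ENNReal.ofReal_mul (by positivity), ← enorm_eq_nnnorm,
    ← ofReal_norm]
  refine ENNReal.ofReal_le_ofReal ?_
  rcases le_total ‖x - y‖ 1 with hxy | hxy
  · have hlip : ‖iteratedFDeriv ℝ (lowFloor s) stdBump x
        - iteratedFDeriv ℝ (lowFloor s) stdBump y‖ ≤ L * ‖x - y‖ :=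
      convex_univ.norm_image_sub_le_of_norm_fderiv_le (𝕜 := ℝ)
        (fun z _ => ((contDiff_stdBump ⊤).differentiable_iteratedFDeriv
          (by exact_mod_cast ENat.natCast_lt_top _)) z)
        (fun z _ => norm_fderiv_iteratedFDeriv.trans_le (hl z)) (mem_univ y) (mem_univ x)
    have hpow : ‖x - y‖ ≤ ‖x - y‖ ^ (s - lowFloor s) := by
      simpa using Real.rpow_le_rpow_of_exponent_ge' (norm_nonneg (x - y)) hxy hα.le hα1
    exact hlip.trans (mul_le_mul (by linarith) hpow (norm_nonneg _) (by positivity))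
  · have hpow : 1 ≤ ‖x - y‖ ^ (s - lowFloor s) := Real.one_le_rpow hxy hα.le
    calc _ ≤ B + B := (norm_sub_le _ _).trans (add_le_add (hb x) (hb y))
      _ ≤ (L + 2 * B) * 1 := by linarith
      _ ≤ _ := mul_le_mul_of_nonneg_left hpow (by positivity)

lemma flatSemi_stdBump_ne_top {s : ℝ} (hs : 0 < s) : flatSemi s univ stdBump ≠ ∞ := by
  refine (iSup_congr fun m => iSup_comm).trans_ne (iSup_le_nat_ne_top fun m hm => ?_)
  by_cases hm1 : 1 ≤ m
  swap
  · simp [hm1]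
  have hm0 : (0 : ℝ) < m := by exact_mod_cast hm1
  have hms : (m : ℝ) < s := (Nat.cast_le.2 hm).trans_lt (lowFloor_lt hs)
  have hsm : 0 < s - m := sub_pos.2 hms
  obtain ⟨C, hC, h⟩ := exists_norm_iteratedFDeriv_stdBump_le (θ := (s - m) / s)
    (by positivity) ((div_lt_one hs).2 (by linarith)) m
  refine ne_top_of_le_ne_top (b := (ENNReal.ofReal C ^ s) ^ (1 / (m : ℝ)))
    (by finiteness) (iSup_le fun _ => iSup₂_le fun x _ => ?_)
  refine ENNReal.rpow_le_rpow (ENNReal.div_le_of_le_mul ?_) (by positivity)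
  have hx : (‖iteratedFDerivWithin ℝ m stdBump univ x‖₊ : ℝ≥0∞) ≤
      ENNReal.ofReal C * ENNReal.ofReal (stdBump x) ^ ((s - m) / s) := by
    rw [iteratedFDerivWithin_univ, ENNReal.ofReal_rpow_of_nonneg (stdBump_nonneg x)
      (by positivity), ← ENNReal.ofReal_mul hC, ← enorm_eq_nnnorm, ← ofReal_norm]
    exact ENNReal.ofReal_le_ofReal (h x)
  refine (ENNReal.rpow_le_rpow hx hs.le).trans_eq ?_
  rw [ENNReal.mul_rpow_of_nonneg _ _ hs.le, ← ENNReal.rpow_mul, div_mul_cancel₀ _ hs.ne']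

/-- Proposition `bump-flat`: for every `s > 0` there is a
constant `C(s)` with `g ∈ F^s(ℝ)` and `‖g‖_{F^s(ℝ)} ≤ C`. -/
theorem statement10 (s : ℝ) (hs : 0 < s) :
    ∃ C : ℝ, 0 < C ∧
      MemFs s (Set.univ : Set ℝ) stdBump ∧
      fsNorm s (Set.univ : Set ℝ) stdBump ≤ ENNReal.ofReal C := by
  have hcs : csNorm s univ stdBump ≠ ∞ :=
    ENNReal.add_ne_top.2 ⟨derivSup_stdBump_ne_top s, holderSemi_stdBump_ne_top hs⟩
  have hflat := flatSemi_stdBump_ne_top hs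
  have hfs : fsNorm s univ stdBump ≠ ∞ := ENNReal.add_ne_top.2 ⟨hcs, hflat⟩
  refine ⟨(fsNorm s univ stdBump).toReal + 1, by positivity,
    ⟨⟨(contDiff_stdBump _).contDiffOn, hcs⟩, fun x _ => stdBump_nonneg x, hflat⟩, ?_⟩
  rw [ENNReal.le_ofReal_iff_toReal_le hfs (by positivity)]
  linarith

end
end

section
/- Let r ∈ (0,1), s > 0, and let Ω ⊆ ℝⁿ be a convex open set. There is a constant C depending only on n, r, s such that for every F ∈ F^s(Ω) and all x, y ∈ Ω: (i) |∇^m (F^r)(x)| ≤ C · ‖F‖_{F^s(Ω)}^{m/s} · F(x)^{r − m/s} for all 0 ≤ m < s; (ii) |∇^{⌊s⌋}(F^r)(x) − ∇^{⌊s⌋}(F^r)(y)| ≤ C · (‖F‖_{Ċ^s(Ω)} + ‖F‖_{Ḟ^s(Ω)}) / min{F(x)^{1−r}, F(y)^{1−r}} · |x−y|^{s−⌊s⌋}, with the conventions 0/0 = 0 and a/0 = ∞; and (iii) if in addition F ≥ ε > 0 on Ω, then ‖F^r‖_{F^s(Ω)} ≤ C · ε^{r−1} · ‖F‖_{F^s(Ω)}.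 -/
open Set ENNReal
open scoped NNReal

noncomputable section

variable {E : Type*} [NormedAddCommGroup E] [NormedSpace ℝ E]

/-! ### Differences of Faà di Bruno terms -/

namespace OrderedFinpartition

variable {G : Type*} [NormedAddCommGroup G] [NormedSpace ℝ G] {n : ℕ} (c : OrderedFinpartition n)

lemma prod_pow_partSize (D : ℝ) : ∏ i, D ^ c.partSize i = D ^ n := by
  simpa using c.prod_sigma_eq_prod (fun _ => D)

lemma norm_compAlongOrderedFinpartition_le_of_weights {q : ℝ [×c.length]→L[ℝ] G}
    {p : ∀ i, E [×c.partSize i]→L[ℝ] ℝ} {Q M D : ℝ} (hq : ‖q‖ ≤ Q)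
    (hp : ∀ i, ‖p i‖ ≤ M * D ^ c.partSize i) :
    ‖c.compAlongOrderedFinpartition q p‖ ≤ Q * M ^ c.length * D ^ n := by
  refine (c.norm_compAlongOrderedFinpartition_le q p).trans ?_
  calc ‖q‖ * ∏ i, ‖p i‖ ≤ Q * ∏ i, (M * D ^ c.partSize i) := by
        gcongr
        · exact (norm_nonneg q).trans hq
        · exact hp _
    _ = Q * M ^ c.length * D ^ n := by
        rw [Finset.prod_mul_distrib, c.prod_pow_partSize]
        simp [mul_assoc]

lemma norm_compAlongOrderedFinpartition_sub_le_of_weights {q₁ q₂ : ℝ [×c.length]→L[ℝ] G}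
    {p₁ p₂ : ∀ i, E [×c.partSize i]→L[ℝ] ℝ} {Q M D δ : ℝ}
    (hq : ‖q₁‖ ≤ Q) (hq' : ‖q₁ - q₂‖ ≤ Q * δ)
    (hp₁ : ∀ i, ‖p₁ i‖ ≤ M * D ^ c.partSize i) (hp₂ : ∀ i, ‖p₂ i‖ ≤ M * D ^ c.partSize i)
    (hp : ∀ i, ‖p₁ i - p₂ i‖ ≤ M * D ^ c.partSize i * δ) :
    ‖c.compAlongOrderedFinpartition q₁ p₁ - c.compAlongOrderedFinpartition q₂ p₂‖ ≤
      (c.length + 1) * (Q * M ^ c.length * D ^ n * δ) := by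
  have hQ : 0 ≤ Q := (norm_nonneg _).trans hq
  have hM : ∀ i, 0 ≤ M * D ^ c.partSize i := fun i => (norm_nonneg _).trans (hp₁ i)
  have hprod : ∏ i, (M * D ^ c.partSize i) = M ^ c.length * D ^ n := by
    rw [Finset.prod_mul_distrib, c.prod_pow_partSize]
    simp
  have hfst : ‖c.compAlongOrderedFinpartition q₁ p₁ - c.compAlongOrderedFinpartition q₁ p₂‖ ≤
      Q * (c.length * (M ^ c.length * D ^ n * δ)) := by
    have h := (c.compAlongOrderedFinpartitionL ℝ E ℝ G q₁).toMultilinearMap.norm_image_sub_le_of_bound'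
      hQ (fun m => ?_) p₁ p₂
    · refine h.trans (mul_le_mul_of_nonneg_left ?_ hQ)
      have hterm : ∀ i : Fin c.length,
          (∏ j, if j = i then ‖p₁ i - p₂ i‖ else max ‖p₁ j‖ ‖p₂ j‖) ≤ M ^ c.length * D ^ n * δ := by
        intro i
        calc (∏ j, if j = i then ‖p₁ i - p₂ i‖ else max ‖p₁ j‖ ‖p₂ j‖)
            ≤ ∏ j, (M * D ^ c.partSize j) * (if j = i then δ else 1) := by
              refine Finset.prod_le_prod (fun j _ => by split_ifs <;> positivity) fun j _ => ?_
              split_ifs with hij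
              · subst hij; exact hp j
              · rw [mul_one]; exact max_le (hp₁ j) (hp₂ j)
          _ = M ^ c.length * D ^ n * δ := by
              rw [Finset.prod_mul_distrib, hprod]; simp
      refine (Finset.sum_le_sum fun i _ => hterm i).trans ?_
      simp
    · exact (c.norm_compAlongOrderedFinpartition_le q₁ m).trans (by gcongr)
  have hsnd : ‖c.compAlongOrderedFinpartition q₁ p₂ - c.compAlongOrderedFinpartition q₂ p₂‖ ≤
      Q * δ * M ^ c.length * D ^ n :=
    c.norm_compAlongOrderedFinpartition_le_of_weights (q := q₁ - q₂) hq' hp₂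
  calc _ ≤ _ := norm_sub_le_norm_sub_add_norm_sub _ (c.compAlongOrderedFinpartition q₁ p₂) _
    _ ≤ _ := add_le_add hfst hsnd
    _ = _ := by ring

end OrderedFinpartition

/-! ### Derivatives of real powers -/

lemma contDiffOn_rpow_Ioi (r : ℝ) (n : WithTop ℕ∞) :
    ContDiffOn ℝ n (fun t : ℝ => t ^ r) (Ioi 0) :=
  contDiffOn_id.rpow_const_of_ne fun _ hx => (ne_of_gt hx)

lemma exists_norm_iteratedFDerivWithin_rpow_le (r : ℝ) (n : ℕ) :
    ∃ c : ℝ, 0 ≤ c ∧ ∀ l ≤ n, ∀ a : ℝ, 0 < a →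
      ‖iteratedFDerivWithin ℝ l (fun t : ℝ => t ^ r) (Ioi 0) a‖ ≤ c * a ^ (r - l) := by
  refine ⟨∑ l ∈ Finset.range (n + 1), |(descPochhammer ℝ l).eval r|,
    Finset.sum_nonneg fun _ _ => abs_nonneg _, fun l hl a ha => ?_⟩
  rw [iteratedFDerivWithin_of_isOpen l isOpen_Ioi (mem_Ioi.2 ha),
    norm_iteratedFDeriv_eq_norm_iteratedDeriv, iteratedDeriv_eq_iterate,
    Real.iter_deriv_rpow_const, norm_mul, Real.norm_of_nonneg (Real.rpow_nonneg ha.le _)]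
  gcongr
  exact Finset.single_le_sum (f := fun l => |(descPochhammer ℝ l).eval r|)
    (fun _ _ => abs_nonneg _) (Finset.mem_range.2 (by omega))

lemma norm_iteratedFDerivWithin_rpow_sub_le {r c : ℝ} {l : ℕ} (hrl : r - (l + 1 : ℕ) ≤ 0)
    (hc0 : 0 ≤ c) (hc : ∀ a : ℝ, 0 < a →
      ‖iteratedFDerivWithin ℝ (l + 1) (fun t : ℝ => t ^ r) (Ioi 0) a‖ ≤ c * a ^ (r - (l + 1 : ℕ)))
    {a b μ : ℝ} (hμ : 0 < μ) (ha : μ ≤ a) (hb : μ ≤ b) :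
    ‖iteratedFDerivWithin ℝ l (fun t : ℝ => t ^ r) (Ioi 0) a -
      iteratedFDerivWithin ℝ l (fun t : ℝ => t ^ r) (Ioi 0) b‖ ≤
      c * μ ^ (r - (l + 1 : ℕ)) * |a - b| := by
  have hdiff := (contDiffOn_rpow_Ioi r (l + 1 : ℕ)).differentiableOn_iteratedFDerivWithin
    (m := l) (by exact_mod_cast Nat.lt_succ_self l) isOpen_Ioi.uniqueDiffOn
  have hsub : Ici μ ⊆ Ioi (0 : ℝ) := fun t ht => hμ.trans_le ht
  refine (convex_Ici μ).norm_image_sub_le_of_norm_hasFDerivWithin_le (x := b) (y := a)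
    (fun t ht => ((hdiff t (hsub ht)).hasFDerivWithinAt).mono hsub) (fun t ht => ?_) hb ha
  rw [norm_fderivWithin_iteratedFDerivWithin]
  refine (hc t (hsub ht)).trans (mul_le_mul_of_nonneg_left ?_ hc0)
  exact Real.rpow_le_rpow_of_nonpos hμ ht hrl

/-- Faà di Bruno's formula for a real power of a positive function. -/
lemma iteratedFDerivWithin_rpow_eq_sum {k : ℕ} {Ω : Set E} (hΩ : IsOpen Ω) {F : E → ℝ}
    (hF : ContDiffOn ℝ k F Ω) (r : ℝ) {m : ℕ} (hm : m ≤ k) {x : E} (hx : x ∈ Ω) (hFx : 0 < F x) :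
    iteratedFDerivWithin ℝ m (fun z => F z ^ r) Ω x =
      ∑ c : OrderedFinpartition m, c.compAlongOrderedFinpartition
        (iteratedFDerivWithin ℝ c.length (fun t : ℝ => t ^ r) (Ioi 0) (F x))
        (fun i => iteratedFDerivWithin ℝ (c.partSize i) F Ω x) := by
  set U := Ω ∩ F ⁻¹' Ioi 0
  have hU : IsOpen U := hF.continuousOn.isOpen_inter_preimage hΩ isOpen_Ioi
  have hxU : x ∈ U := ⟨hx, hFx⟩
  have htransfer : ∀ (f : E → ℝ) (j : ℕ),
      iteratedFDerivWithin ℝ j f Ω x = iteratedFDerivWithin ℝ j f U x := fun f j => by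
    rw [iteratedFDerivWithin_of_isOpen j hΩ hx, iteratedFDerivWithin_of_isOpen j hU hxU]
  have h := ((contDiffOn_rpow_Ioi r k).ftaylorSeriesWithin isOpen_Ioi.uniqueDiffOn).comp
    ((hF.mono inter_subset_left).ftaylorSeriesWithin hU.uniqueDiffOn)
    (fun z (hz : z ∈ U) => hz.2)
  rw [htransfer]
  simp only [htransfer F]
  exact (h.eq_iteratedFDerivWithin_of_uniqueDiffOn (by exact_mod_cast hm) hU.uniqueDiffOn hxU).symm

/-- `F` is a nonnegative `C^s` function on the convex open set `Ω`, whose flat and Hölder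
seminorms are at most `A`. -/
structure FlatBound (s A : ℝ) (Ω : Set E) (F : E → ℝ) : Prop where
  convex : Convex ℝ Ω
  isOpen : IsOpen Ω
  bound_nonneg : 0 ≤ A
  nonneg : ∀ x ∈ Ω, 0 ≤ F x
  contDiffOn : ContDiffOn ℝ (lowFloor s) F Ω
  norm_le : ∀ m ≤ lowFloor s, ∀ x ∈ Ω,
    ‖iteratedFDerivWithin ℝ m F Ω x‖ ≤ A ^ ((m : ℝ) / s) * F x ^ (1 - (m : ℝ) / s)
  norm_sub_le : ∀ x ∈ Ω, ∀ y ∈ Ω,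
    ‖iteratedFDerivWithin ℝ (lowFloor s) F Ω x - iteratedFDerivWithin ℝ (lowFloor s) F Ω y‖ ≤
      A * ‖x - y‖ ^ (s - (lowFloor s : ℝ))

lemma norm_iteratedFDerivWithin_zero_sub (F : E → ℝ) (Ω : Set E) (x y : E) :
    ‖iteratedFDerivWithin ℝ 0 F Ω x - iteratedFDerivWithin ℝ 0 F Ω y‖ = |F x - F y| := by
  rw [iteratedFDerivWithin_zero_eq_comp]
  simp only [Function.comp_apply, ← map_sub, LinearIsometryEquiv.norm_map, Real.norm_eq_abs]

namespace FlatBound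

variable {s A : ℝ} {Ω : Set E} {F : E → ℝ}

lemma rpow_one_div_le (h : FlatBound s A Ω F) (hs : 0 < s) (hk : 1 ≤ lowFloor s) {x y : E}
    (hx : x ∈ Ω) (hy : y ∈ Ω) : F x ^ (1 / s) ≤ F y ^ (1 / s) + A ^ (1 / s) * ‖x - y‖ := by
  have hs1 : 1 < s := (by exact_mod_cast hk : (1 : ℝ) ≤ lowFloor s).trans_lt (lowFloor_lt hs)
  have hs1' : 1 / s ≤ 1 := by rw [div_le_one hs]; exact hs1.le
  have hA : 0 ≤ A ^ (1 / s) := Real.rpow_nonneg h.bound_nonneg _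
  have hreg : ∀ δ : ℝ, 0 < δ →
      (F x + δ) ^ (1 / s) ≤ (F y + δ) ^ (1 / s) + A ^ (1 / s) * ‖x - y‖ := by
    intro δ hδ
    have hpos : ∀ z ∈ Ω, 0 < F z + δ := fun z hz => by have := h.nonneg z hz; positivity
    have hder : ∀ z ∈ Ω, HasFDerivWithinAt (fun z => (F z + δ) ^ (1 / s))
        ((1 / s * (F z + δ) ^ (1 / s - 1)) • fderivWithin ℝ F Ω z) Ω z := fun z hz =>
      ((((h.contDiffOn.differentiableOn (by exact_mod_cast Nat.one_le_iff_ne_zero.1 hk)) z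
        hz).hasFDerivWithinAt).add_const δ).rpow_const (Or.inl (hpos z hz).ne')
    have hle := h.convex.norm_image_sub_le_of_norm_hasFDerivWithin_le (C := A ^ (1 / s)) hder
      (fun z hz => ?_) hy hx
    · have := (le_abs_self _).trans hle
      linarith
    · have h1 := h.norm_le 1 hk z hz
      rw [norm_iteratedFDerivWithin_one F (h.isOpen.uniqueDiffWithinAt hz), Nat.cast_one] at h1
      have hz0 := h.nonneg z hz
      have hcoef : 0 ≤ 1 / s * (F z + δ) ^ (1 / s - 1) :=
        mul_nonneg (by positivity) (Real.rpow_nonneg (hpos z hz).le _)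
      rw [norm_smul, Real.norm_of_nonneg hcoef]
      calc 1 / s * (F z + δ) ^ (1 / s - 1) * ‖fderivWithin ℝ F Ω z‖
          ≤ 1 * (F z + δ) ^ (1 / s - 1) * (A ^ (1 / s) * (F z + δ) ^ (1 - 1 / s)) := by
            have hmono : F z ^ (1 - 1 / s) ≤ (F z + δ) ^ (1 - 1 / s) :=
              Real.rpow_le_rpow hz0 (by linarith) (by linarith)
            refine mul_le_mul ?_ (h1.trans (mul_le_mul_of_nonneg_left hmono hA))
              (norm_nonneg _) ?_
            · exact mul_le_mul_of_nonneg_right hs1' (Real.rpow_nonneg (hpos z hz).le _)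
            · exact mul_nonneg zero_le_one (Real.rpow_nonneg (hpos z hz).le _)
        _ = A ^ (1 / s) * ((F z + δ) ^ (1 / s - 1) * (F z + δ) ^ (1 - 1 / s)) := by ring
        _ = A ^ (1 / s) := by
            rw [← Real.rpow_add (hpos z hz)]; simp
  have hlim : ∀ z, Filter.Tendsto (fun δ : ℝ => (F z + δ) ^ (1 / s))
      (nhdsWithin 0 (Ioi 0)) (nhds (F z ^ (1 / s))) := fun z => by
    have : Continuous fun δ : ℝ => (F z + δ) ^ (1 / s) :=
      (continuous_const.add continuous_id).rpow_const fun _ => Or.inr (by positivity)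
    simpa using (this.tendsto 0).mono_left nhdsWithin_le_nhds
  exact le_of_tendsto_of_tendsto (hlim x) ((hlim y).add_const _)
    (Filter.eventually_of_mem self_mem_nhdsWithin hreg)

lemma growth (h : FlatBound s A Ω F) (hs : 0 < s) {x y : E} (hx : x ∈ Ω) (hy : y ∈ Ω) :
    F x ≤ 2 ^ s * (F y + A * ‖x - y‖ ^ s) := by
  have hFx := h.nonneg x hx
  have hFy := h.nonneg y hy
  have hA := h.bound_nonneg
  rcases Nat.eq_zero_or_pos (lowFloor s) with hk | hk
  · have hd := h.norm_sub_le x hx y hy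
    rw [hk, norm_iteratedFDerivWithin_zero_sub, Nat.cast_zero, sub_zero] at hd
    have hle : F x ≤ F y + A * ‖x - y‖ ^ s := by linarith [(le_abs_self _).trans hd]
    exact hle.trans (le_mul_of_one_le_left (hFx.trans hle)
      (Real.one_le_rpow one_le_two hs.le))
  · have hroot := h.rpow_one_div_le hs hk hx hy
    set a := F y ^ (1 / s) with ha
    set b := A ^ (1 / s) * ‖x - y‖ with hb
    have ha0 : 0 ≤ a := Real.rpow_nonneg hFy _
    have hb0 : 0 ≤ b := mul_nonneg (Real.rpow_nonneg hA _) (norm_nonneg _)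
    have has : a ^ s = F y := by
      rw [ha, ← Real.rpow_mul hFy, one_div_mul_cancel hs.ne', Real.rpow_one]
    have hbs : b ^ s = A * ‖x - y‖ ^ s := by
      rw [hb, Real.mul_rpow (Real.rpow_nonneg hA _) (norm_nonneg _), ← Real.rpow_mul hA,
        one_div_mul_cancel hs.ne', Real.rpow_one]
    have hmax : a + b ≤ 2 * max a b := by linarith [le_max_left a b, le_max_right a b]
    calc F x = (F x ^ (1 / s)) ^ s := by
          rw [← Real.rpow_mul hFx, one_div_mul_cancel hs.ne', Real.rpow_one]
      _ ≤ (2 * max a b) ^ s :=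
          Real.rpow_le_rpow (Real.rpow_nonneg hFx _) (hroot.trans hmax) hs.le
      _ = 2 ^ s * (max a b) ^ s := Real.mul_rpow zero_le_two (le_max_of_le_left ha0)
      _ ≤ 2 ^ s * (F y + A * ‖x - y‖ ^ s) := by
          gcongr
          rw [← has, ← hbs]
          rcases max_cases a b with ⟨hm, -⟩ | ⟨hm, -⟩ <;> rw [hm] <;>
            linarith [Real.rpow_nonneg ha0 s, Real.rpow_nonneg hb0 s]

end FlatBound

lemma rpow_mul_rpow_sub_eq {A μ s : ℝ} (hA : 0 ≤ A) (hμ : 0 < μ) (p : ℝ) (m : ℕ) :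
    A ^ ((m : ℝ) / s) * μ ^ (p - (m : ℝ) / s) = μ ^ p * ((A / μ) ^ (1 / s)) ^ m := by
  rw [← Real.rpow_natCast, ← Real.rpow_mul (div_nonneg hA hμ.le), one_div_mul_eq_div,
    Real.div_rpow hA hμ.le, Real.rpow_sub hμ]
  ring

namespace FlatBound

variable {s A : ℝ} {Ω : Set E} {F : E → ℝ}

variable (E) in
lemma exists_norm_rpow_le_of_pos (r s : ℝ) {m : ℕ} (hm : m ≤ lowFloor s) :
    ∃ C : ℝ, 0 ≤ C ∧ ∀ {A : ℝ} {Ω : Set E} {F : E → ℝ}, FlatBound s A Ω F → ∀ x ∈ Ω, 0 < F x →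
      ‖iteratedFDerivWithin ℝ m (fun z => F z ^ r) Ω x‖ ≤
        C * (A ^ ((m : ℝ) / s) * F x ^ (r - (m : ℝ) / s)) := by
  obtain ⟨c, hc0, hc⟩ := exists_norm_iteratedFDerivWithin_rpow_le r m
  refine ⟨Fintype.card (OrderedFinpartition m) * c, by positivity, ?_⟩
  intro A Ω F h x hx hFx
  have hA := h.bound_nonneg
  rw [iteratedFDerivWithin_rpow_eq_sum h.isOpen h.contDiffOn r hm hx hFx,
    rpow_mul_rpow_sub_eq hA hFx]
  set D := (A / F x) ^ (1 / s)
  have hterm : ∀ p : OrderedFinpartition m, ‖p.compAlongOrderedFinpartition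
        (iteratedFDerivWithin ℝ p.length (fun t : ℝ => t ^ r) (Ioi 0) (F x))
        (fun i => iteratedFDerivWithin ℝ (p.partSize i) F Ω x)‖ ≤ c * (F x ^ r * D ^ m) := by
    intro p
    refine (p.norm_compAlongOrderedFinpartition_le_of_weights (hc _ p.length_le _ hFx)
      (M := F x) (D := D) fun i => ?_).trans_eq ?_
    · refine (h.norm_le _ ((p.partSize_le i).trans hm) x hx).trans_eq ?_
      rw [rpow_mul_rpow_sub_eq hA hFx, Real.rpow_one]
    · rw [Real.rpow_sub hFx, Real.rpow_natCast]
      field_simp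
  refine (norm_sum_le_of_le _ fun p _ => hterm p).trans_eq ?_
  simp [mul_assoc]

lemma le_mul_of_eq_zero (h : FlatBound s A Ω F) (hs : 0 < s) {x z : E} (hx : x ∈ Ω)
    (hz : z ∈ Ω) (hFx : F x = 0) {p : ℝ} (hp : 0 ≤ p) :
    F z ^ p ≤ 2 ^ (s * p) * (A ^ p * ‖z - x‖ ^ (s * p)) := by
  have hA := h.bound_nonneg
  have hg := h.growth hs hz hx
  rw [hFx, zero_add] at hg
  refine (Real.rpow_le_rpow (h.nonneg z hz) hg hp).trans_eq ?_
  rw [Real.mul_rpow (by positivity) (by positivity), Real.mul_rpow hA (by positivity),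
    ← Real.rpow_mul zero_le_two, ← Real.rpow_mul (norm_nonneg _)]

variable (E) in
/-- Derivatives of `F ^ r`, at positivity points of `F` and, for orders `m ≤ r * s`, everywhere. -/
lemma exists_norm_rpow_le (r : ℝ) {s : ℝ} (hs : 0 < s) (m : ℕ) (hm : m ≤ lowFloor s) :
    ∃ C : ℝ, 0 ≤ C ∧ ∀ {A : ℝ} {Ω : Set E} {F : E → ℝ}, FlatBound s A Ω F → ∀ x ∈ Ω,
      0 < F x ∨ (m : ℝ) ≤ r * s →
      ‖iteratedFDerivWithin ℝ m (fun z => F z ^ r) Ω x‖ ≤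
        C * (A ^ ((m : ℝ) / s) * F x ^ (r - (m : ℝ) / s)) := by
  induction m with
  | zero =>
    refine ⟨1, zero_le_one, ?_⟩
    intro A Ω F h x hx _
    rw [norm_iteratedFDerivWithin_zero, Real.norm_of_nonneg (Real.rpow_nonneg (h.nonneg x hx) _)]
    simp
  | succ m ih =>
    obtain ⟨C₁, hC₁, hpos⟩ := exists_norm_rpow_le_of_pos E r s hm
    obtain ⟨C₂, hC₂, ih⟩ := ih (by omega)
    refine ⟨max C₁ (C₂ * 2), le_max_of_le_left hC₁, ?_⟩
    intro A Ω F h x hx hcase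
    have hA := h.bound_nonneg
    by_cases hFx : 0 < F x
    · refine (hpos h x hx hFx).trans ?_
      gcongr
      exact le_max_left _ _
    · have hFx0 : F x = 0 := le_antisymm (not_lt.1 hFx) (h.nonneg x hx)
      have hmr : ((m + 1 : ℕ) : ℝ) ≤ r * s := hcase.resolve_left hFx
      have hmr' : (m : ℝ) + 1 ≤ r * s := by exact_mod_cast hmr
      set p := r - (m : ℝ) / s with hp
      have hsp : s * p = r * s - m := by rw [hp]; field_simp
      have hp0 : 0 < p := by
        refine pos_of_mul_pos_right (a := s) ?_ hs.le
        rw [hsp]; linarith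
      set g := iteratedFDerivWithin ℝ m (fun z => F z ^ r) Ω
      have hg : ∀ z ∈ Ω, ‖g z‖ ≤ C₂ * (A ^ ((m : ℝ) / s) * F z ^ p) := fun z hz =>
        ih h z hz (Or.inr (by linarith))
      have hgx : g x = 0 := by
        have := hg x hx
        rw [hFx0, Real.zero_rpow hp0.ne', mul_zero, mul_zero] at this
        exact norm_le_zero_iff.1 this
      set K := C₂ * (A ^ ((m : ℝ) / s) * (2 ^ (s * p) * A ^ p)) with hK
      have hK0 : 0 ≤ K := by positivity
      have hgz : ∀ z ∈ Ω, ‖g z - g x‖ ≤ K * ‖z - x‖ ^ (s * p) := fun z hz => by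
        rw [hgx, sub_zero]
        refine (hg z hz).trans ?_
        calc C₂ * (A ^ ((m : ℝ) / s) * F z ^ p)
            ≤ C₂ * (A ^ ((m : ℝ) / s) * (2 ^ (s * p) * (A ^ p * ‖z - x‖ ^ (s * p)))) := by
              gcongr
              exact h.le_mul_of_eq_zero hs hx hz hFx0 hp0.le
          _ = K * ‖z - x‖ ^ (s * p) := by rw [hK]; ring
      have hΩ : Ω ∈ nhds x := h.isOpen.mem_nhds hx
      rw [← norm_fderivWithin_iteratedFDerivWithin, fderivWithin_of_isOpen h.isOpen hx]
      rcases hmr'.eq_or_lt with heq | hlt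
      · have hsp1 : s * p = 1 := by rw [hsp]; linarith
        have hexp : r - ((m + 1 : ℕ) : ℝ) / s = 0 := by
          push_cast; rw [heq]; field_simp; ring
        rw [hexp, Real.rpow_zero, mul_one]
        refine (norm_fderiv_le_of_lip' ℝ hK0 (Filter.eventually_of_mem hΩ fun z hz => ?_)).trans ?_
        · simpa [hsp1] using hgz z hz
        · have hAA : A ^ ((m : ℝ) / s) * A ^ p = A ^ (((m + 1 : ℕ) : ℝ) / s) := by
            rw [← Real.rpow_add_of_nonneg hA (by positivity) hp0.le]
            congr 1
            linarith
          have hK' : K = C₂ * 2 * A ^ (((m + 1 : ℕ) : ℝ) / s) := by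
            rw [hK, hsp1, Real.rpow_one, ← hAA]; ring
          rw [hK']
          gcongr
          exact le_max_right _ _
      · have hexp : 0 < r - ((m + 1 : ℕ) : ℝ) / s := by
          rw [sub_pos, div_lt_iff₀ hs]; exact_mod_cast hlt
        rw [hFx0, Real.zero_rpow hexp.ne', mul_zero, mul_zero]
        refine le_of_forall_pos_le_add fun η hη => ?_
        rw [zero_add]
        have hq : 0 < s * p - 1 := by rw [hsp]; linarith
        have htend : Filter.Tendsto (fun z => K * ‖z - x‖ ^ (s * p - 1)) (nhds x) (nhds 0) := by
          have : Continuous fun z => K * ‖z - x‖ ^ (s * p - 1) :=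
            continuous_const.mul ((continuous_id.sub continuous_const).norm.rpow_const
              fun _ => Or.inr hq.le)
          simpa [Real.zero_rpow hq.ne'] using this.tendsto x
        refine norm_fderiv_le_of_lip' ℝ hη.le ?_
        filter_upwards [hΩ, htend.eventually (gt_mem_nhds hη)] with z hz hzη
        refine (hgz z hz).trans ?_
        rcases (norm_nonneg (z - x)).eq_or_lt with h0 | h0
        · rw [← h0, Real.zero_rpow (by linarith)]; simp
        · calc K * ‖z - x‖ ^ (s * p) = K * ‖z - x‖ ^ (s * p - 1) * ‖z - x‖ := by
                rw [Real.rpow_sub_one h0.ne']; field_simp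
            _ ≤ η * ‖z - x‖ := by gcongr

end FlatBound

lemma rpow_le_of_le_mul {μ v T K p q : ℝ} (hμ : 0 < μ) (hμv : μ ≤ v) (hvT : v ≤ K * T)
    (hμT : μ ≤ T) (hK : 1 ≤ K) (hp : p ≤ 1) (hq : q ≤ 0) (hqp : q ≤ p) :
    v ^ p ≤ K * (μ ^ q * T ^ (p - q)) := by
  have hT : 0 < T := hμ.trans_le hμT
  rcases le_total p 0 with hp0 | hp0
  · calc v ^ p ≤ μ ^ p := Real.rpow_le_rpow_of_nonpos hμ hμv hp0
      _ = μ ^ q * μ ^ (p - q) := by rw [← Real.rpow_add hμ]; congr 1; ring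
      _ ≤ μ ^ q * T ^ (p - q) := by
          gcongr
      _ ≤ K * (μ ^ q * T ^ (p - q)) := le_mul_of_one_le_left (by positivity) hK
  · calc v ^ p ≤ (K * T) ^ p := Real.rpow_le_rpow (hμ.le.trans hμv) hvT hp0
      _ = K ^ p * (T ^ q * T ^ (p - q)) := by
          rw [Real.mul_rpow (by positivity) hT.le, ← Real.rpow_add hT]; congr 2; ring
      _ ≤ K * (μ ^ q * T ^ (p - q)) := by
          have h1 : K ^ p ≤ K := by simpa using Real.rpow_le_rpow_of_exponent_le hK hp
          have h2 : T ^ q ≤ μ ^ q := Real.rpow_le_rpow_of_nonpos hμ hμT hq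
          gcongr

namespace FlatBound

variable {s A : ℝ} {Ω : Set E} {F : E → ℝ}

lemma norm_le_of_le_mul (h : FlatBound s A Ω F) (hs : 0 < s) {x : E} (hx : x ∈ Ω) {K μ : ℝ}
    (hμ : 0 < μ) (hK : 1 ≤ K) (hFx : F x ≤ K * μ) {j : ℕ} (hj : j ≤ lowFloor s) :
    ‖iteratedFDerivWithin ℝ j F Ω x‖ ≤ K * μ * ((A / μ) ^ (1 / s)) ^ j := by
  have hA := h.bound_nonneg
  have hj' : (j : ℝ) / s ≤ 1 := by
    rw [div_le_one hs]
    exact (by exact_mod_cast hj : (j : ℝ) ≤ lowFloor s).trans (lowFloor_lt hs).le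
  have hj0 : 0 ≤ (j : ℝ) / s := by positivity
  refine (h.norm_le j hj x hx).trans ?_
  calc A ^ ((j : ℝ) / s) * F x ^ (1 - (j : ℝ) / s)
      ≤ A ^ ((j : ℝ) / s) * (K * μ ^ (1 - (j : ℝ) / s)) := by
        gcongr
        refine (Real.rpow_le_rpow (h.nonneg x hx) hFx (by linarith)).trans ?_
        rw [Real.mul_rpow (by positivity) hμ.le]
        gcongr
        simpa using Real.rpow_le_rpow_of_exponent_le hK (by linarith : 1 - (j : ℝ) / s ≤ 1)
    _ = K * (A ^ ((j : ℝ) / s) * μ ^ (1 - (j : ℝ) / s)) := by ring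
    _ = _ := by rw [rpow_mul_rpow_sub_eq hA hμ, Real.rpow_one]; ring

lemma norm_sub_le_of_near (h : FlatBound s A Ω F) (hs : 0 < s) {x y : E} (hx : x ∈ Ω)
    (hy : y ∈ Ω) (hFy : 0 < F y) (hnear : A * ‖x - y‖ ^ s ≤ F y) {j : ℕ} (hj : j ≤ lowFloor s) :
    ‖iteratedFDerivWithin ℝ j F Ω x - iteratedFDerivWithin ℝ j F Ω y‖ ≤
      2 ^ s * 2 * F y * ((A / F y) ^ (1 / s)) ^ j *
        ((A / F y) ^ (1 / s) * ‖x - y‖) ^ (s - (lowFloor s : ℝ)) := by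
  have hA := h.bound_nonneg
  have hks := lowFloor_lt hs
  have hsk := le_lowFloor_add_one s
  have hAF : 0 ≤ A / F y := div_nonneg hA hFy.le
  have hK : (1 : ℝ) ≤ 2 ^ s * 2 := by
    linarith [Real.one_le_rpow (one_le_two : (1 : ℝ) ≤ 2) hs.le]
  set D := (A / F y) ^ (1 / s) with hD
  have hD0 : 0 ≤ D := Real.rpow_nonneg hAF _
  have hDs : D ^ s = A / F y := by
    rw [hD, ← Real.rpow_mul hAF, one_div_mul_cancel hs.ne', Real.rpow_one]
  rcases hj.eq_or_lt with rfl | hlt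
  · refine (h.norm_sub_le x hx y hy).trans ?_
    have hpow : F y * D ^ lowFloor s * D ^ (s - (lowFloor s : ℝ)) = A := by
      rw [mul_assoc, ← Real.rpow_natCast, ← Real.rpow_add_of_nonneg hD0 (by positivity)
        (by linarith), add_sub_cancel, hDs]
      field_simp
    rw [Real.mul_rpow hD0 (norm_nonneg _)]
    calc A * ‖x - y‖ ^ (s - (lowFloor s : ℝ))
        ≤ (2 ^ s * 2) * (A * ‖x - y‖ ^ (s - (lowFloor s : ℝ))) :=
          le_mul_of_one_le_left (by positivity) hK
      _ = _ := by
          nth_rewrite 1 [← hpow]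
          ring
  · have hD1 : D * ‖x - y‖ ≤ 1 := by
      refine le_of_not_gt fun hlt1 => ?_
      have := Real.one_lt_rpow hlt1 hs
      rw [Real.mul_rpow hD0 (norm_nonneg _), hDs, div_mul_eq_mul_div, one_lt_div hFy] at this
      linarith
    have hdiff := h.contDiffOn.differentiableOn_iteratedFDerivWithin
      (m := j) (by exact_mod_cast hlt) h.isOpen.uniqueDiffOn
    have hseg : segment ℝ y x ⊆ Ω := h.convex.segment_subset hy hx
    have hmv := (convex_segment y x).norm_image_sub_le_of_norm_hasFDerivWithin_le
      (C := 2 ^ s * 2 * F y * D ^ (j + 1))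
      (fun z hz => ((hdiff z (hseg hz)).hasFDerivWithinAt).mono hseg) (fun z hz => ?_)
      (left_mem_segment ℝ y x) (right_mem_segment ℝ y x)
    · refine hmv.trans ?_
      calc 2 ^ s * 2 * F y * D ^ (j + 1) * ‖x - y‖ = 2 ^ s * 2 * F y * D ^ j * (D * ‖x - y‖) := by
            ring
        _ ≤ _ := by
            gcongr
            exact Real.self_le_rpow_of_le_one (by positivity) hD1 (by linarith)
    · rw [norm_fderivWithin_iteratedFDerivWithin]
      refine h.norm_le_of_le_mul hs (hseg hz) hFy hK ?_ hlt
      refine (h.growth hs (hseg hz) hy).trans ?_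
      have hzy : ‖z - y‖ ≤ ‖x - y‖ := by
        obtain ⟨t, ht, rfl⟩ := (segment_eq_image' ℝ y x ▸ hz)
        rw [add_sub_cancel_left, norm_smul, Real.norm_of_nonneg ht.1]
        exact mul_le_of_le_one_left (norm_nonneg _) ht.2
      have : A * ‖z - y‖ ^ s ≤ F y := le_trans (by gcongr) hnear
      rw [mul_assoc]
      gcongr
      linarith

variable (E) in
lemma exists_norm_rpow_sub_le_of_near {r s : ℝ} (hr1 : r < 1) (hs : 0 < s) :
    ∃ C : ℝ, 0 ≤ C ∧ ∀ {A : ℝ} {Ω : Set E} {F : E → ℝ}, FlatBound s A Ω F →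
      ∀ x ∈ Ω, ∀ y ∈ Ω, 0 < F y → F y ≤ F x → A * ‖x - y‖ ^ s ≤ F y →
      ‖iteratedFDerivWithin ℝ (lowFloor s) (fun z => F z ^ r) Ω y -
        iteratedFDerivWithin ℝ (lowFloor s) (fun z => F z ^ r) Ω x‖ ≤
        C * (A * F y ^ (r - 1) * ‖x - y‖ ^ (s - (lowFloor s : ℝ))) := by
  set k := lowFloor s with hk
  obtain ⟨c, hc0, hc⟩ := exists_norm_iteratedFDerivWithin_rpow_le r (k + 1)
  set K : ℝ := 2 ^ s * 2 with hKdef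
  have hK : 1 ≤ K := by
    linarith [Real.one_le_rpow (one_le_two : (1 : ℝ) ≤ 2) hs.le]
  refine ⟨Fintype.card (OrderedFinpartition k) * ((k + 1) * (c * K * K ^ k)), by positivity, ?_⟩
  intro A Ω F h x hx y hy hFy hFxy hnear
  have hA := h.bound_nonneg
  have hks : (k : ℝ) < s := lowFloor_lt hs
  have hFx : 0 < F x := hFy.trans_le hFxy
  have hAF : 0 ≤ A / F y := div_nonneg hA hFy.le
  set μ := F y with hμ
  set D := (A / μ) ^ (1 / s) with hD
  have hD0 : 0 ≤ D := Real.rpow_nonneg hAF _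
  have hDs : D ^ s = A / μ := by
    rw [hD, ← Real.rpow_mul hAF, one_div_mul_cancel hs.ne', Real.rpow_one]
  set δ := (D * ‖x - y‖) ^ (s - (k : ℝ)) with hδ
  have hδ0 : 0 ≤ δ := by positivity
  have hFxK : F x ≤ K * μ := by
    refine (h.growth hs hx hy).trans ?_
    rw [hKdef, mul_assoc]
    gcongr
    linarith
  have hsub : ∀ j ≤ k, ‖iteratedFDerivWithin ℝ j F Ω x - iteratedFDerivWithin ℝ j F Ω y‖ ≤
      K * μ * D ^ j * δ := fun j hj => h.norm_sub_le_of_near hs hx hy hFy hnear hj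
  have hval : |μ - F x| ≤ K * μ * δ := by
    have := hsub 0 (Nat.zero_le _)
    rwa [norm_iteratedFDerivWithin_zero_sub, pow_zero, mul_one, abs_sub_comm] at this
  rw [iteratedFDerivWithin_rpow_eq_sum h.isOpen h.contDiffOn r le_rfl hy hFy,
    iteratedFDerivWithin_rpow_eq_sum h.isOpen h.contDiffOn r le_rfl hx hFx,
    ← Finset.sum_sub_distrib]
  have hscale : μ ^ r * D ^ k * δ = A * μ ^ (r - 1) * ‖x - y‖ ^ (s - (k : ℝ)) := by
    rw [hδ, Real.mul_rpow hD0 (norm_nonneg _), ← Real.rpow_natCast, mul_assoc, ← mul_assoc (D ^ _),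
      ← Real.rpow_add_of_nonneg hD0 (by positivity) (by linarith), add_sub_cancel, hDs,
      Real.rpow_sub_one hFy.ne']
    field_simp
  have hterm : ∀ p : OrderedFinpartition k, ‖p.compAlongOrderedFinpartition
        (iteratedFDerivWithin ℝ p.length (fun t : ℝ => t ^ r) (Ioi 0) (F y))
        (fun i => iteratedFDerivWithin ℝ (p.partSize i) F Ω y) -
      p.compAlongOrderedFinpartition
        (iteratedFDerivWithin ℝ p.length (fun t : ℝ => t ^ r) (Ioi 0) (F x))
        (fun i => iteratedFDerivWithin ℝ (p.partSize i) F Ω x)‖ ≤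
      (k + 1) * (c * K * K ^ k * (μ ^ r * D ^ k * δ)) := by
    intro p
    have hlen : p.length ≤ k := p.length_le
    refine (p.norm_compAlongOrderedFinpartition_sub_le_of_weights
      (Q := c * K * μ ^ (r - p.length)) (M := K * μ) (D := D) (δ := δ) ?_ ?_ (fun i => ?_)
      (fun i => ?_) (fun i => ?_)).trans ?_
    · refine (hc _ (by omega) _ hFy).trans ?_
      gcongr
      exact le_mul_of_one_le_right hc0 hK
    · refine (norm_iteratedFDerivWithin_rpow_sub_le ?_ hc0 (hc _ (by omega)) hFy le_rfl
        hFxy).trans ?_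
      · push_cast
        linarith [(Nat.cast_nonneg p.length : (0 : ℝ) ≤ p.length)]
      · refine (mul_le_mul_of_nonneg_left hval (by positivity)).trans_eq ?_
        have : r - ((p.length + 1 : ℕ) : ℝ) = (r - p.length) - 1 := by push_cast; ring
        rw [this, Real.rpow_sub_one hFy.ne']
        field_simp
    · exact h.norm_le_of_le_mul hs hy hFy hK (le_mul_of_one_le_left hFy.le hK) (p.partSize_le i)
    · exact h.norm_le_of_le_mul hs hx hFy hK hFxK (p.partSize_le i)
    · rw [norm_sub_rev]
      exact hsub _ (p.partSize_le i)
    · have hμp : μ ^ (r - (p.length : ℝ)) * μ ^ p.length = μ ^ r := by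
        rw [← Real.rpow_natCast, ← Real.rpow_add hFy, sub_add_cancel]
      calc ((p.length : ℝ) + 1) * (c * K * μ ^ (r - (p.length : ℝ)) * (K * μ) ^ p.length * D ^ k * δ)
          = (p.length + 1) * (c * K * K ^ p.length * (μ ^ r * D ^ k * δ)) := by
            rw [← hμp, mul_pow]; ring
        _ ≤ (k + 1) * (c * K * K ^ k * (μ ^ r * D ^ k * δ)) := by
            gcongr
  refine (norm_sum_le_of_le _ fun p _ => hterm p).trans_eq ?_
  rw [hscale]
  simp [mul_assoc]

variable (E) in
lemma exists_norm_rpow_sub_le {r s : ℝ} (hr1 : r < 1) (hs : 0 < s) :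
    ∃ C : ℝ, 0 ≤ C ∧ ∀ {A : ℝ} {Ω : Set E} {F : E → ℝ}, FlatBound s A Ω F →
      ∀ x ∈ Ω, ∀ y ∈ Ω, 0 < F y → F y ≤ F x →
      ‖iteratedFDerivWithin ℝ (lowFloor s) (fun z => F z ^ r) Ω y -
        iteratedFDerivWithin ℝ (lowFloor s) (fun z => F z ^ r) Ω x‖ ≤
        C * (A * F y ^ (r - 1) * ‖x - y‖ ^ (s - (lowFloor s : ℝ))) := by
  obtain ⟨C₁, hC₁, hnear⟩ := exists_norm_rpow_sub_le_of_near E hr1 hs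
  obtain ⟨C₂, hC₂, hfar⟩ := exists_norm_rpow_le E r hs (lowFloor s) le_rfl
  set k := lowFloor s with hk
  set K : ℝ := 2 ^ s * 2 with hKdef
  have hK : 1 ≤ K := by
    linarith [Real.one_le_rpow (one_le_two : (1 : ℝ) ≤ 2) hs.le]
  refine ⟨max C₁ (2 * (C₂ * K)), le_max_of_le_left hC₁, ?_⟩
  intro A Ω F h x hx y hy hFy hFxy
  have hA := h.bound_nonneg
  have hks : (k : ℝ) < s := lowFloor_lt hs
  have hR : 0 ≤ A * F y ^ (r - 1) * ‖x - y‖ ^ (s - (k : ℝ)) := by positivity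
  rcases le_or_gt (A * ‖x - y‖ ^ s) (F y) with hcase | hcase
  · exact (hnear h x hx y hy hFy hFxy hcase).trans
      (mul_le_mul_of_nonneg_right (le_max_left _ _) hR)
  · set T := A * ‖x - y‖ ^ s with hT
    have hFxK : F x ≤ K * T := by
      refine (h.growth hs hx hy).trans ?_
      rw [hKdef, mul_assoc]
      gcongr
      linarith
    have hT0 : 0 < T := hFy.trans hcase
    have hks1 : (k : ℝ) / s < 1 := (div_lt_one hs).2 hks
    have hks0 : 0 ≤ (k : ℝ) / s := by positivity
    have hscale : A ^ ((k : ℝ) / s) * T ^ (r - (k : ℝ) / s - (r - 1)) =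
        A * ‖x - y‖ ^ (s - (k : ℝ)) := by
      have he : r - (k : ℝ) / s - (r - 1) = 1 - (k : ℝ) / s := by ring
      rw [he, hT, Real.mul_rpow hA (by positivity), ← mul_assoc,
        ← Real.rpow_add_of_nonneg hA hks0 (by linarith), ← Real.rpow_mul (norm_nonneg _)]
      congr 1
      · simp
      · congr 1; field_simp
    have hpt : ∀ z ∈ Ω, F y ≤ F z → F z ≤ K * T →
        ‖iteratedFDerivWithin ℝ k (fun z => F z ^ r) Ω z‖ ≤
          C₂ * K * (A * F y ^ (r - 1) * ‖x - y‖ ^ (s - (k : ℝ))) := by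
      intro z hz hyz hzT
      refine (hfar h z hz (Or.inl (hFy.trans_le hyz))).trans ?_
      calc C₂ * (A ^ ((k : ℝ) / s) * F z ^ (r - (k : ℝ) / s))
          ≤ C₂ * (A ^ ((k : ℝ) / s) * (K * (F y ^ (r - 1) * T ^ (r - (k : ℝ) / s - (r - 1))))) := by
            gcongr
            exact rpow_le_of_le_mul hFy hyz hzT hcase.le hK (by linarith) (by linarith)
              (by linarith)
        _ = C₂ * K * (F y ^ (r - 1) * (A ^ ((k : ℝ) / s) * T ^ (r - (k : ℝ) / s - (r - 1)))) := by
            ring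
        _ = _ := by rw [hscale]; ring
    refine (_root_.norm_sub_le _ _).trans ((add_le_add (hpt y hy le_rfl (hFxy.trans hFxK))
      (hpt x hx hFxy hFxK)).trans ?_)
    rw [← two_mul, ← mul_assoc]
    exact mul_le_mul_of_nonneg_right (le_max_right _ _) hR

end FlatBound

/-! ### Passage to extended nonnegative reals -/

section ENNReal

variable {s : ℝ} {Ω : Set E} {F : E → ℝ}

lemma coe_nnnorm_le_ofReal {G : Type*} [SeminormedAddCommGroup G] {v : G} {b : ℝ} (h : ‖v‖ ≤ b) :
    (‖v‖₊ : ℝ≥0∞) ≤ ENNReal.ofReal b := by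
  rw [← enorm_eq_nnnorm, ← ofReal_norm]
  exact ENNReal.ofReal_le_ofReal h

lemma ofReal_le_fsNorm {x : E} (hx : x ∈ Ω) : ENNReal.ofReal (F x) ≤ fsNorm s Ω F := by
  have h : (‖iteratedFDerivWithin ℝ 0 F Ω x‖₊ : ℝ≥0∞) ≤ derivSup s Ω F :=
    le_iSup₂_of_le 0 (Nat.zero_le _) (le_iSup₂_of_le x hx le_rfl)
  refine le_trans ?_ (h.trans (le_self_add.trans le_self_add))
  rw [← enorm_eq_nnnorm, ← ofReal_norm, norm_iteratedFDerivWithin_zero]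
  exact ENNReal.ofReal_le_ofReal (Real.le_norm_self _)

lemma holderSemi_add_flatSemi_le_fsNorm : holderSemi s Ω F + flatSemi s Ω F ≤ fsNorm s Ω F :=
  add_le_add_left le_add_self _

lemma MemFs.fsNorm_ne_top (hF : MemFs s Ω F) : fsNorm s Ω F ≠ ∞ :=
  ENNReal.add_ne_top.2 ⟨hF.1.2, hF.2.2⟩

lemma MemFs.holderSemi_add_flatSemi_ne_top (hF : MemFs s Ω F) :
    holderSemi s Ω F + flatSemi s Ω F ≠ ∞ :=
  ne_top_of_le_ne_top hF.fsNorm_ne_top holderSemi_add_flatSemi_le_fsNorm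

lemma norm_le_of_flatSemi_le {a : ℝ} (ha : 0 ≤ a) (hs : 0 < s)
    (hflat : flatSemi s Ω F ≤ ENNReal.ofReal a) {x : E} (hx : x ∈ Ω) (hFx : 0 ≤ F x) {m : ℕ}
    (hm1 : 1 ≤ m) (hm : m ≤ lowFloor s) :
    ‖iteratedFDerivWithin ℝ m F Ω x‖ ≤ a ^ ((m : ℝ) / s) * F x ^ (1 - (m : ℝ) / s) := by
  have hm0 : (0 : ℝ) < m := by exact_mod_cast hm1
  have hms : (m : ℝ) < s := (by exact_mod_cast hm : (m : ℝ) ≤ lowFloor s).trans_lt (lowFloor_lt hs)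
  set v := iteratedFDerivWithin ℝ m F Ω x with hv
  have h1 : ((‖v‖₊ : ℝ≥0∞) ^ s / ENNReal.ofReal (F x) ^ (s - (m : ℝ))) ^ (1 / (m : ℝ)) ≤
      ENNReal.ofReal a :=
    le_trans (le_iSup₂_of_le m hm1 (le_iSup₂_of_le hm x (by rw [ciSup_pos hx]))) hflat
  rw [one_div, ENNReal.rpow_inv_le_iff hm0, ENNReal.ofReal_rpow_of_nonneg ha hm0.le,
    ENNReal.ofReal_rpow_of_nonneg hFx (by linarith),
    ENNReal.div_le_iff_le_mul (Or.inr ENNReal.ofReal_ne_top) (Or.inl ENNReal.ofReal_ne_top),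
    ← ENNReal.ofReal_mul (by positivity), ← enorm_eq_nnnorm, ← ofReal_norm,
    ENNReal.ofReal_rpow_of_nonneg (norm_nonneg _) hs.le,
    ENNReal.ofReal_le_ofReal_iff (by positivity)] at h1
  calc ‖v‖ = (‖v‖ ^ s) ^ (1 / s) := by
        rw [← Real.rpow_mul (norm_nonneg _), mul_one_div_cancel hs.ne', Real.rpow_one]
    _ ≤ (a ^ (m : ℝ) * F x ^ (s - m)) ^ (1 / s) :=
        Real.rpow_le_rpow (by positivity) h1 (by positivity)
    _ = a ^ ((m : ℝ) / s) * F x ^ (1 - (m : ℝ) / s) := by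
        rw [Real.mul_rpow (by positivity) (by positivity), ← Real.rpow_mul ha,
          ← Real.rpow_mul hFx]
        congr 2 <;> field_simp

lemma norm_sub_le_of_holderSemi_le {a : ℝ} (ha : 0 ≤ a)
    (hhol : holderSemi s Ω F ≤ ENNReal.ofReal a) {x y : E} (hx : x ∈ Ω) (hy : y ∈ Ω) :
    ‖iteratedFDerivWithin ℝ (lowFloor s) F Ω x - iteratedFDerivWithin ℝ (lowFloor s) F Ω y‖ ≤
      a * ‖x - y‖ ^ (s - (lowFloor s : ℝ)) := by
  rcases eq_or_ne x y with rfl | hxy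
  · rw [sub_self, norm_zero]
    positivity
  · have hpos : 0 < ‖x - y‖ ^ (s - (lowFloor s : ℝ)) :=
      Real.rpow_pos_of_pos (norm_pos_iff.2 (sub_ne_zero.2 hxy)) _
    set v := iteratedFDerivWithin ℝ (lowFloor s) F Ω x - iteratedFDerivWithin ℝ (lowFloor s) F Ω y
    have h1 : (‖v‖₊ : ℝ≥0∞) / ENNReal.ofReal (‖x - y‖ ^ (s - (lowFloor s : ℝ))) ≤
        ENNReal.ofReal a :=
      le_trans (le_iSup₂_of_le x hx (le_iSup₂_of_le y hy (by rw [ciSup_pos hxy]))) hhol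
    rwa [ENNReal.div_le_iff_le_mul (Or.inr ENNReal.ofReal_ne_top) (Or.inl ENNReal.ofReal_ne_top),
      ← ENNReal.ofReal_mul ha, ← enorm_eq_nnnorm, ← ofReal_norm,
      ENNReal.ofReal_le_ofReal_iff (by positivity)] at h1

lemma MemFs.flatBound (hF : MemFs s Ω F) (hs : 0 < s) (hconv : Convex ℝ Ω) (hopen : IsOpen Ω) :
    FlatBound s (holderSemi s Ω F + flatSemi s Ω F).toReal Ω F := by
  have hA : ENNReal.ofReal (holderSemi s Ω F + flatSemi s Ω F).toReal =
      holderSemi s Ω F + flatSemi s Ω F :=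
    ENNReal.ofReal_toReal hF.holderSemi_add_flatSemi_ne_top
  refine ⟨hconv, hopen, ENNReal.toReal_nonneg, hF.2.1, hF.1.1, fun m hm x hx => ?_,
    fun x hx y hy => ?_⟩
  · rcases Nat.eq_zero_or_pos m with rfl | hm1
    · simp [abs_of_nonneg (hF.2.1 x hx)]
    · exact norm_le_of_flatSemi_le ENNReal.toReal_nonneg hs (by rw [hA]; exact le_add_self) hx
        (hF.2.1 x hx) hm1 hm
  · exact norm_sub_le_of_holderSemi_le ENNReal.toReal_nonneg (by rw [hA]; exact le_self_add) hx hy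

lemma iteratedFDerivWithin_rpow_eq_zero {r : ℝ} (hr : r ≠ 0) (h : ∀ z ∈ Ω, F z = 0) (m : ℕ)
    {x : E} (hx : x ∈ Ω) : iteratedFDerivWithin ℝ m (fun z => F z ^ r) Ω x = 0 := by
  rw [iteratedFDerivWithin_congr (f := fun _ => (0 : ℝ))
    (fun z hz => by simp [h z hz, Real.zero_rpow hr]) hx m]
  simp

variable (E) in
lemma exists_nnnorm_rpow_le {r s : ℝ} (hr : r ≠ 0) (hs : 0 < s) :
    ∃ C : ℝ, 1 ≤ C ∧ ∀ (Ω : Set E), Convex ℝ Ω → IsOpen Ω → ∀ F : E → ℝ, MemFs s Ω F →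
      ∀ x ∈ Ω, ∀ m ≤ lowFloor s,
        (‖iteratedFDerivWithin ℝ m (fun z => F z ^ r) Ω x‖₊ : ℝ≥0∞) ≤
          ENNReal.ofReal C * fsNorm s Ω F ^ ((m : ℝ) / s)
            * ENNReal.ofReal (F x) ^ (r - (m : ℝ) / s) := by
  have hex : ∀ m : ℕ, ∃ C : ℝ, 0 ≤ C ∧ (m ≤ lowFloor s → ∀ {A : ℝ} {Ω : Set E} {F : E → ℝ},
      FlatBound s A Ω F → ∀ x ∈ Ω, 0 < F x ∨ (m : ℝ) ≤ r * s →
      ‖iteratedFDerivWithin ℝ m (fun z => F z ^ r) Ω x‖ ≤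
        C * (A ^ ((m : ℝ) / s) * F x ^ (r - (m : ℝ) / s))) := fun m => by
    by_cases hm : m ≤ lowFloor s
    · obtain ⟨C, hC, h⟩ := FlatBound.exists_norm_rpow_le E r hs m hm
      exact ⟨C, hC, fun _ => h⟩
    · exact ⟨0, le_rfl, fun h => absurd h hm⟩
  choose C hC0 hC using hex
  have hsum : 0 ≤ ∑ m ∈ Finset.range (lowFloor s + 1), C m := Finset.sum_nonneg fun m _ => hC0 m
  refine ⟨1 + ∑ m ∈ Finset.range (lowFloor s + 1), C m, by linarith, ?_⟩
  intro Ω hconv hopen F hF x hx m hm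
  have hCm : C m ≤ 1 + ∑ m ∈ Finset.range (lowFloor s + 1), C m := by
    have := Finset.single_le_sum (f := C) (fun m _ => hC0 m)
      (Finset.mem_range.2 (Nat.lt_succ_of_le hm))
    linarith
  set B := 1 + ∑ m ∈ Finset.range (lowFloor s + 1), C m
  have hB : 0 < B := by positivity
  have hFx := hF.2.1 x hx
  by_cases hcase : 0 < F x ∨ (m : ℝ) ≤ r * s
  · have hflat := hF.flatBound hs hconv hopen
    have hA := hflat.bound_nonneg
    refine (coe_nnnorm_le_ofReal (hC m hm hflat x hx hcase)).trans ?_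
    rw [ENNReal.ofReal_mul (hC0 m), ENNReal.ofReal_mul (by positivity),
      ← ENNReal.ofReal_rpow_of_nonneg hA (by positivity),
      ENNReal.ofReal_toReal hF.holderSemi_add_flatSemi_ne_top, ← mul_assoc]
    refine mul_le_mul' (mul_le_mul' (ENNReal.ofReal_le_ofReal hCm) ?_) (le_of_eq ?_)
    · exact ENNReal.rpow_le_rpow holderSemi_add_flatSemi_le_fsNorm (by positivity)
    · rcases hcase with hpos | hms
      · rw [ENNReal.ofReal_rpow_of_pos hpos]
      · rw [ENNReal.ofReal_rpow_of_nonneg hFx]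
        rw [sub_nonneg, div_le_iff₀ hs]
        exact hms
  · push Not at hcase
    by_cases hN : fsNorm s Ω F = 0
    · have hzero : ∀ z ∈ Ω, F z = 0 := fun z hz => by
        have h := ofReal_le_fsNorm (s := s) (F := F) hz
        rw [hN, nonpos_iff_eq_zero, ENNReal.ofReal_eq_zero] at h
        exact le_antisymm h (hF.2.1 z hz)
      rw [iteratedFDerivWithin_rpow_eq_zero hr hzero m hx]
      simp
    · have hneg : r - (m : ℝ) / s < 0 := by
        rw [sub_neg, lt_div_iff₀ hs]
        exact hcase.2
      have hpow : fsNorm s Ω F ^ ((m : ℝ) / s) ≠ 0 := by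
        rw [Ne, ENNReal.rpow_eq_zero_iff]
        rintro (⟨h, -⟩ | ⟨h, -⟩)
        · exact hN h
        · exact hF.fsNorm_ne_top h
      rw [ENNReal.ofReal_of_nonpos hcase.1, ENNReal.zero_rpow_of_neg hneg, ENNReal.mul_top]
      · exact le_top
      · exact mul_ne_zero (ENNReal.ofReal_pos.2 hB).ne' hpow

variable (E) in
lemma exists_nnnorm_rpow_sub_le {r s : ℝ} (hr0 : 0 < r) (hr1 : r < 1) (hs : 0 < s) :
    ∃ C : ℝ, 1 ≤ C ∧ ∀ (Ω : Set E), Convex ℝ Ω → IsOpen Ω → ∀ F : E → ℝ, MemFs s Ω F →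
      ∀ x ∈ Ω, ∀ y ∈ Ω,
        (‖iteratedFDerivWithin ℝ (lowFloor s) (fun z => F z ^ r) Ω x
            - iteratedFDerivWithin ℝ (lowFloor s) (fun z => F z ^ r) Ω y‖₊ : ℝ≥0∞) ≤
          ENNReal.ofReal C * (holderSemi s Ω F + flatSemi s Ω F)
            / min (ENNReal.ofReal (F x) ^ (1 - r)) (ENNReal.ofReal (F y) ^ (1 - r))
            * ENNReal.ofReal (‖x - y‖ ^ (s - (lowFloor s : ℝ))) := by
  obtain ⟨C₀, hC₀, hC⟩ := FlatBound.exists_norm_rpow_sub_le E hr1 hs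
  refine ⟨1 + C₀, by linarith, ?_⟩
  intro Ω hconv hopen F hF x hx y hy
  wlog hyx : F y ≤ F x generalizing x y with H
  · have h := H y hy x hx (le_of_not_ge hyx)
    rwa [min_comm, norm_sub_rev y x, ← nnnorm_neg, neg_sub] at h
  have hmono : ENNReal.ofReal (F y) ^ (1 - r) ≤ ENNReal.ofReal (F x) ^ (1 - r) :=
    ENNReal.rpow_le_rpow (ENNReal.ofReal_le_ofReal hyx) (by linarith)
  rw [min_eq_right hmono]
  have hflat := hF.flatBound hs hconv hopen
  have hA := hflat.bound_nonneg
  set A := holderSemi s Ω F + flatSemi s Ω F with hAdef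
  have hAtop : A ≠ ∞ := hF.holderSemi_add_flatSemi_ne_top
  rcases (hF.2.1 y hy).eq_or_lt with hFy | hFy
  · by_cases hA0 : A = 0
    · rw [hA0, ENNReal.toReal_zero] at hflat
      have hzero : ∀ z ∈ Ω, F z = 0 := fun z hz => by
        have h := hflat.growth hs hz hy
        rw [← hFy] at h
        exact le_antisymm (by simpa using h) (hF.2.1 z hz)
      rw [iteratedFDerivWithin_rpow_eq_zero hr0.ne' hzero _ hx,
        iteratedFDerivWithin_rpow_eq_zero hr0.ne' hzero _ hy]
      simp
    · rcases eq_or_ne x y with rfl | hxy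
      · simp
      · have hpos : 0 < ‖x - y‖ ^ (s - (lowFloor s : ℝ)) :=
          Real.rpow_pos_of_pos (norm_pos_iff.2 (sub_ne_zero.2 hxy)) _
        rw [← hFy, ENNReal.ofReal_zero, ENNReal.zero_rpow_of_pos (by linarith),
          ENNReal.div_zero, ENNReal.top_mul]
        · exact le_top
        · exact (ENNReal.ofReal_pos.2 hpos).ne'
        · exact mul_ne_zero (ENNReal.ofReal_pos.2 (by linarith)).ne' hA0
  · have hreal := hC hflat x hx y hy hFy hyx
    rw [norm_sub_rev] at hreal
    refine (coe_nnnorm_le_ofReal hreal).trans ?_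
    have hinv : ENNReal.ofReal (F y ^ (r - 1)) = (ENNReal.ofReal (F y) ^ (1 - r))⁻¹ := by
      rw [← ENNReal.rpow_neg, neg_sub, ENNReal.ofReal_rpow_of_pos hFy]
    rw [ENNReal.ofReal_mul hC₀, ENNReal.ofReal_mul (by positivity), ENNReal.ofReal_mul hA,
      ENNReal.ofReal_toReal hAtop, hinv, div_eq_mul_inv, ← mul_assoc, ← mul_assoc]
    gcongr
    linarith

lemma rpow_mul_rpow_le_of_le {N v ε r t : ℝ} (hε : 0 < ε) (hv : ε ≤ v) (hvN : v ≤ N)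
    (hr1 : r < 1) (ht1 : t ≤ 1) : N ^ t * v ^ (r - t) ≤ ε ^ (r - 1) * N := by
  have hv0 : 0 < v := hε.trans_le hv
  have hN : 0 < N := hv0.trans_le hvN
  calc N ^ t * v ^ (r - t) = v ^ (r - 1) * (N ^ t * v ^ (1 - t)) := by
        rw [mul_left_comm, ← Real.rpow_add hv0]; congr 2; ring
    _ ≤ ε ^ (r - 1) * (N ^ t * N ^ (1 - t)) := by
        have h1 : v ^ (r - 1) ≤ ε ^ (r - 1) :=
          Real.rpow_le_rpow_of_nonpos hε hv (by linarith)
        gcongr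
    _ = ε ^ (r - 1) * N := by
        rw [← Real.rpow_add hN]; simp


lemma norm_le_of_coe_nnnorm_le {G : Type*} [SeminormedAddCommGroup G] {v : G} {C f r t : ℝ}
    {M : ℝ≥0∞} (hM : M ≠ ∞) (hC : 0 ≤ C) (hf : 0 < f) (ht : 0 ≤ t)
    (h : (‖v‖₊ : ℝ≥0∞) ≤ ENNReal.ofReal C * M ^ t * ENNReal.ofReal f ^ (r - t)) :
    ‖v‖ ≤ C * (M.toReal ^ t * f ^ (r - t)) := by
  rw [← ENNReal.ofReal_toReal hM, ENNReal.ofReal_rpow_of_nonneg ENNReal.toReal_nonneg ht,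
    ENNReal.ofReal_rpow_of_pos hf, ← ENNReal.ofReal_mul hC, ← ENNReal.ofReal_mul (by positivity),
    ← enorm_eq_nnnorm, ← ofReal_norm, ENNReal.ofReal_le_ofReal_iff (by positivity)] at h
  rwa [← mul_assoc]

lemma rpow_le_of_norm_le {C N v ε r a : ℝ} {m : ℕ} (hC : 1 ≤ C) (hε : 0 < ε) (hv : ε ≤ v)
    (hN : 0 ≤ N) (hr1 : r < 1) (hs : 0 < s) (hm : 1 ≤ m) (ha : 0 ≤ a)
    (h : a ≤ C * (N ^ ((m : ℝ) / s) * v ^ (r - (m : ℝ) / s))) :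
    a ^ s ≤ (C ^ s * ε ^ (r - 1) * N) ^ (m : ℝ) * (v ^ r) ^ (s - (m : ℝ)) := by
  have hv0 : 0 < v := hε.trans_le hv
  have hC0 : 0 < C := by linarith
  calc a ^ s ≤ (C * (N ^ ((m : ℝ) / s) * v ^ (r - (m : ℝ) / s))) ^ s :=
        Real.rpow_le_rpow ha h hs.le
    _ = C ^ s * (N ^ (m : ℝ) * (v ^ ((r - 1) * m) * v ^ (r * (s - m)))) := by
        rw [Real.mul_rpow hC0.le (by positivity), Real.mul_rpow (by positivity) (by positivity),
          ← Real.rpow_mul hN, ← Real.rpow_mul hv0.le, ← Real.rpow_add hv0, div_mul_cancel₀ _ hs.ne']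
        congr 3
        field_simp
        ring
    _ ≤ (C ^ s) ^ (m : ℝ) * (N ^ (m : ℝ) * (ε ^ ((r - 1) * m) * v ^ (r * (s - m)))) := by
        have h1 : C ^ s ≤ (C ^ s) ^ (m : ℝ) :=
          Real.self_le_rpow_of_one_le (Real.one_le_rpow hC hs.le) (by exact_mod_cast hm)
        have h2 : v ^ ((r - 1) * m) ≤ ε ^ ((r - 1) * m) :=
          Real.rpow_le_rpow_of_nonpos hε hv
            (mul_nonpos_of_nonpos_of_nonneg (by linarith) (Nat.cast_nonneg m))
        gcongr
    _ = (C ^ s * ε ^ (r - 1) * N) ^ (m : ℝ) * (v ^ r) ^ (s - (m : ℝ)) := by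
        rw [Real.mul_rpow (by positivity) hN, Real.mul_rpow (by positivity) (by positivity),
          Real.rpow_mul hε.le, Real.rpow_mul hv0.le]
        ring

section LowerBound

variable {C ε r : ℝ}

lemma derivSup_rpow_le (hF : MemFs s Ω F) (hC : 1 ≤ C) (hr1 : r < 1) (hs : 0 < s) (hε : 0 < ε)
    (hεF : ∀ x ∈ Ω, ε ≤ F x)
    (h : ∀ x ∈ Ω, ∀ m ≤ lowFloor s,
      (‖iteratedFDerivWithin ℝ m (fun z => F z ^ r) Ω x‖₊ : ℝ≥0∞) ≤
        ENNReal.ofReal C * fsNorm s Ω F ^ ((m : ℝ) / s)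
          * ENNReal.ofReal (F x) ^ (r - (m : ℝ) / s)) :
    derivSup s Ω (fun z => F z ^ r) ≤ ENNReal.ofReal (C * ε ^ (r - 1)) * fsNorm s Ω F := by
  have hN := hF.fsNorm_ne_top
  refine iSup₂_le fun m hm => iSup₂_le fun x hx => ?_
  have hms : (m : ℝ) < s := (by exact_mod_cast hm : (m : ℝ) ≤ lowFloor s).trans_lt (lowFloor_lt hs)
  have hFN : F x ≤ (fsNorm s Ω F).toReal :=
    (ENNReal.ofReal_le_iff_le_toReal hN).1 (ofReal_le_fsNorm hx)
  have hreal := norm_le_of_coe_nnnorm_le hN (by linarith) (hε.trans_le (hεF x hx))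
    (by positivity) (h x hx m hm)
  have hle := rpow_mul_rpow_le_of_le hε (hεF x hx) hFN hr1 ((div_le_one hs).2 hms.le)
  refine (coe_nnnorm_le_ofReal (hreal.trans (mul_le_mul_of_nonneg_left hle (by linarith)))).trans
    (le_of_eq ?_)
  rw [← mul_assoc, ENNReal.ofReal_mul (by positivity), ENNReal.ofReal_toReal hN]

lemma flatSemi_rpow_le (hF : MemFs s Ω F) (hC : 1 ≤ C) (hr1 : r < 1) (hs : 0 < s) (hε : 0 < ε)
    (hεF : ∀ x ∈ Ω, ε ≤ F x)
    (h : ∀ x ∈ Ω, ∀ m ≤ lowFloor s,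
      (‖iteratedFDerivWithin ℝ m (fun z => F z ^ r) Ω x‖₊ : ℝ≥0∞) ≤
        ENNReal.ofReal C * fsNorm s Ω F ^ ((m : ℝ) / s)
          * ENNReal.ofReal (F x) ^ (r - (m : ℝ) / s)) :
    flatSemi s Ω (fun z => F z ^ r) ≤ ENNReal.ofReal (C ^ s * ε ^ (r - 1)) * fsNorm s Ω F := by
  have hN := hF.fsNorm_ne_top
  refine iSup₂_le fun m hm1 => iSup₂_le fun hm x => iSup_le fun hx => ?_
  have hm0 : (0 : ℝ) < m := by exact_mod_cast hm1
  have hFx := hε.trans_le (hεF x hx)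
  have hreal := norm_le_of_coe_nnnorm_le hN (by linarith) hFx (by positivity) (h x hx m hm)
  have hle := rpow_le_of_norm_le hC hε (hεF x hx) ENNReal.toReal_nonneg hr1 hs hm1
    (norm_nonneg _) hreal
  rw [one_div, ENNReal.rpow_inv_le_iff hm0, ← ENNReal.ofReal_toReal hN,
    ← ENNReal.ofReal_mul (by positivity), ENNReal.ofReal_rpow_of_nonneg (by positivity) hm0.le]
  refine ENNReal.div_le_of_le_mul ?_
  rw [ENNReal.ofReal_rpow_of_pos (by positivity), ← ENNReal.ofReal_mul (by positivity),
    ← enorm_eq_nnnorm, ← ofReal_norm, ENNReal.ofReal_rpow_of_nonneg (norm_nonneg _) hs.le]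
  exact ENNReal.ofReal_le_ofReal hle

lemma holderSemi_rpow_le (hC : 1 ≤ C) (hr1 : r < 1) (hε : 0 < ε)
    (hεF : ∀ x ∈ Ω, ε ≤ F x)
    (h : ∀ x ∈ Ω, ∀ y ∈ Ω,
      (‖iteratedFDerivWithin ℝ (lowFloor s) (fun z => F z ^ r) Ω x
          - iteratedFDerivWithin ℝ (lowFloor s) (fun z => F z ^ r) Ω y‖₊ : ℝ≥0∞) ≤
        ENNReal.ofReal C * (holderSemi s Ω F + flatSemi s Ω F)
          / min (ENNReal.ofReal (F x) ^ (1 - r)) (ENNReal.ofReal (F y) ^ (1 - r))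
          * ENNReal.ofReal (‖x - y‖ ^ (s - (lowFloor s : ℝ)))) :
    holderSemi s Ω (fun z => F z ^ r) ≤ ENNReal.ofReal (C * ε ^ (r - 1)) * fsNorm s Ω F := by
  refine iSup₂_le fun x hx => iSup₂_le fun y hy => iSup_le fun _ => ?_
  refine ENNReal.div_le_of_le_mul ((h x hx y hy).trans (mul_le_mul_left ?_ _))
  have hmin : ENNReal.ofReal ε ^ (1 - r) ≤
      min (ENNReal.ofReal (F x) ^ (1 - r)) (ENNReal.ofReal (F y) ^ (1 - r)) :=
    le_min (ENNReal.rpow_le_rpow (ENNReal.ofReal_le_ofReal (hεF x hx)) (by linarith))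
      (ENNReal.rpow_le_rpow (ENNReal.ofReal_le_ofReal (hεF y hy)) (by linarith))
  calc _ ≤ ENNReal.ofReal C * fsNorm s Ω F / ENNReal.ofReal ε ^ (1 - r) :=
        ENNReal.div_le_div (mul_le_mul_right holderSemi_add_flatSemi_le_fsNorm _) hmin
    _ = ENNReal.ofReal (C * ε ^ (r - 1)) * fsNorm s Ω F := by
        rw [ENNReal.ofReal_mul (by linarith), ← ENNReal.ofReal_rpow_of_pos hε, div_eq_mul_inv,
          ← ENNReal.rpow_neg, neg_sub, mul_right_comm]

end LowerBound

end ENNReal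

/-- Lemma `key-flat`: for `r ∈ (0,1)`, `s > 0`, convex open
`Ω ⊆ ℝⁿ`, there is `C = C(n,r,s)` such that for every `F ∈ F^s(Ω)`:
(i) `|∇^m(F^r)(x)| ≤ C ‖F‖_{F^s}^{m/s} F(x)^{r−m/s}` for `0 ≤ m < s`;
(ii) `|∇^{⌊s⌋}(F^r)(x) − ∇^{⌊s⌋}(F^r)(y)| ≤
  C (‖F‖_{Ċ^s} + ‖F‖_{Ḟ^s}) / min{F(x)^{1−r}, F(y)^{1−r}} · |x−y|^{s−⌊s⌋}`;
(iii) if `F ≥ ε > 0` on `Ω`, then `‖F^r‖_{F^s(Ω)} ≤ C ε^{r−1} ‖F‖_{F^s(Ω)}`.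
The quantities are taken in `ℝ≥0∞`, realizing the conventions `0/0 = 0`,
`a/0 = ∞`. -/
theorem statement19 (n : ℕ) (hn : 1 ≤ n) (r s : ℝ) (hr0 : 0 < r) (hr1 : r < 1)
    (hs : 0 < s) :
    ∃ C : ℝ, 0 < C ∧
      ∀ (Ω : Set (EuclideanSpace ℝ (Fin n))), Convex ℝ Ω → IsOpen Ω →
      ∀ F : EuclideanSpace ℝ (Fin n) → ℝ, MemFs s Ω F →
        (∀ x ∈ Ω, ∀ m ≤ lowFloor s,
          (‖iteratedFDerivWithin ℝ m (fun z => F z ^ r) Ω x‖₊ : ℝ≥0∞) ≤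
            ENNReal.ofReal C * fsNorm s Ω F ^ ((m : ℝ) / s)
              * ENNReal.ofReal (F x) ^ (r - (m : ℝ) / s)) ∧
        (∀ x ∈ Ω, ∀ y ∈ Ω,
          (‖iteratedFDerivWithin ℝ (lowFloor s) (fun z => F z ^ r) Ω x
              - iteratedFDerivWithin ℝ (lowFloor s) (fun z => F z ^ r) Ω y‖₊ :
                ℝ≥0∞) ≤
            ENNReal.ofReal C * (holderSemi s Ω F + flatSemi s Ω F)
              / min (ENNReal.ofReal (F x) ^ (1 - r))
                    (ENNReal.ofReal (F y) ^ (1 - r))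
              * ENNReal.ofReal (‖x - y‖ ^ (s - (lowFloor s : ℝ)))) ∧
        (∀ ε : ℝ, 0 < ε → (∀ x ∈ Ω, ε ≤ F x) →
          fsNorm s Ω (fun z => F z ^ r) ≤
            ENNReal.ofReal (C * ε ^ (r - 1)) * fsNorm s Ω F) := by
  obtain ⟨C₁, hC₁, h₁⟩ := exists_nnnorm_rpow_le (EuclideanSpace ℝ (Fin n)) hr0.ne' hs
  obtain ⟨C₂, hC₂, h₂⟩ := exists_nnnorm_rpow_sub_le (EuclideanSpace ℝ (Fin n)) hr0 hr1 hs
  have hC₁s : 0 < C₁ ^ s := by positivity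
  refine ⟨C₁ + C₂ + C₁ ^ s, by positivity, fun Ω hconv hopen F hF => ⟨fun x hx m hm => ?_,
    fun x hx y hy => ?_, fun ε hε hεF => ?_⟩⟩
  · refine (h₁ Ω hconv hopen F hF x hx m hm).trans ?_
    gcongr
    linarith
  · refine (h₂ Ω hconv hopen F hF x hx y hy).trans ?_
    gcongr
    linarith
  · have hd := derivSup_rpow_le hF hC₁ hr1 hs hε hεF (h₁ Ω hconv hopen F hF)
    have hh := holderSemi_rpow_le hC₂ hr1 hε hεF (h₂ Ω hconv hopen F hF)
    have hf := flatSemi_rpow_le hF hC₁ hr1 hs hε hεF (h₁ Ω hconv hopen F hF)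
    refine (add_le_add (add_le_add hd hh) hf).trans (le_of_eq ?_)
    rw [← add_mul, ← add_mul, ← ENNReal.ofReal_add (by positivity) (by positivity),
      ← ENNReal.ofReal_add (by positivity) (by positivity), ← add_mul, ← add_mul]

end
end
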